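/- arXiv:2006.12405 — 2 statements merged into one kernel-verified Lean document; each statement's English description precedes it below -/
import Mathlib

section
/- Let 𝒜 be a unital C*-algebra, 𝒮 ⊆ 𝒜 an operator system, and n a positive integer. Every positive linear map ψ: 𝒮 → M_n(ℂ) is decomposable if and only if J_n(𝒮) is contained in the closure of the cone 𝒮⁺ ⊗ M_n(ℂ)⁺ in M_n(𝒜). -/
/-!
A linear map `φ : S → Mₙ(ℂ)` corresponds to the functional `s_φ` on `Mₙ(S)`, and positivity
properties of `φ` are nonnegativity properties of `s_φ`: the map is positive iff `s_φ ≥ 0` on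
`S⁺ ⊗ Mₙ(ℂ)⁺`, equivalently on its closure since positive maps are bounded; it is completely
positive iff `s_φ ≥ 0` on the positive elements of `Mₙ(S)`, and co-completely positive iff `s_φ ≥ 0`
on their transposes.

It is decomposable iff `s_φ ≥ 0` on `Jₙ(S)`: in that case `s_φ` is a positive functional on the
operator system `{(x, xᵀ)} ⊆ Mₙ(𝒜) ⊕ Mₙ(𝒜)`, and its positive extension to the whole algebra has
the form `(x, y) ↦ F₁ x + F₂ y`, which splits `φ` into a completely positive and a co-completely
positive part. What remains is the Hahn-Banach separation of the points of `Jₙ(S)` from the closed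
cone.
-/

open scoped ComplexOrder
open Matrix

/-- An element of a star ring is *positive* if it equals `star b * b` for some `b`;
in a (matrix algebra over a) C*-algebra this is the usual notion of positivity. -/
def IsPosElem {R : Type*} [Ring R] [StarRing R] (x : R) : Prop :=
  ∃ b : R, x = star b * b

variable {A : Type*} [NormedRing A] [StarRing A] [CStarRing A]
  [CompleteSpace A] [NormedAlgebra ℂ A] [StarModule ℂ A]

/-- The canonical image in `Mₘ(𝒜)` of a matrix with entries in the operator system `S`. -/
def matCoe {S : Submodule ℂ A} {m : ℕ} (s : Matrix (Fin m) (Fin m) S) :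
    Matrix (Fin m) (Fin m) A :=
  Matrix.of fun j k => (s j k : A)

/-- `J_m(S)`: matrices over `S` which are positive in `Mₘ(𝒜)` together with their
partial transpose. -/
def memJ {S : Submodule ℂ A} {m : ℕ} (s : Matrix (Fin m) (Fin m) S) : Prop :=
  IsPosElem (matCoe s) ∧ IsPosElem (matCoe s)ᵀ

/-- A map `φ : S → Mₙ(ℂ)` is positive if it sends positive elements of `𝒜` lying in `S`
to positive semidefinite matrices. -/
def IsPosMap {S : Submodule ℂ A} {n : ℕ}
    (φ : S →ₗ[ℂ] Matrix (Fin n) (Fin n) ℂ) : Prop :=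
  ∀ s : S, IsPosElem (s : A) → IsPosElem (φ s)

/-- Complete positivity of `φ : S → Mₙ(ℂ)`: every positive matrix over `S` is sent,
entrywise, to a positive element of `Mₘ(Mₙ(ℂ))`. -/
def IsCPMap {S : Submodule ℂ A} {n : ℕ}
    (φ : S →ₗ[ℂ] Matrix (Fin n) (Fin n) ℂ) : Prop :=
  ∀ (m : ℕ) (s : Matrix (Fin m) (Fin m) S),
    IsPosElem (matCoe s) → IsPosElem (s.map ⇑φ)

/-- `φ` is co-completely positive if `transpose ∘ φ` is completely positive. -/
def IsCoCPMap {S : Submodule ℂ A} {n : ℕ}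
    (φ : S →ₗ[ℂ] Matrix (Fin n) (Fin n) ℂ) : Prop :=
  ∀ (m : ℕ) (s : Matrix (Fin m) (Fin m) S),
    IsPosElem (matCoe s) → IsPosElem (s.map fun a => (φ a)ᵀ)

/-- `φ` is decomposable if it is the sum of a completely positive and a
co-completely positive map. -/
noncomputable def IsDecomposable {S : Submodule ℂ A} {n : ℕ}
    (φ : S →ₗ[ℂ] Matrix (Fin n) (Fin n) ℂ) : Prop :=
  ∃ ψ η : S →ₗ[ℂ] Matrix (Fin n) (Fin n) ℂ,
    IsCPMap ψ ∧ IsCoCPMap η ∧ φ = ψ + η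

/-- The dual functional `s_φ` on `Mₙ(S)`, `s_φ([x_{ij}]) = ∑_{i,j} (φ(x_{ij}))_{ij}`. -/
noncomputable def dualFunc {S : Submodule ℂ A} {n : ℕ}
    (φ : S →ₗ[ℂ] Matrix (Fin n) (Fin n) ℂ)
    (x : Matrix (Fin n) (Fin n) S) : ℂ :=
  ∑ i, ∑ j, φ (x i j) i j

/-- The cone `S⁺ ⊗ Mₙ(ℂ)⁺` inside `Mₙ(𝒜)`: finite sums `∑ sₗ ⊗ xₗ` with `sₗ ∈ S`
positive in `𝒜` and `xₗ` positive semidefinite. -/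
def posCone (S : Submodule ℂ A) (n : ℕ) : Set (Matrix (Fin n) (Fin n) A) :=
  { T | ∃ (k : ℕ) (s : Fin k → A) (x : Fin k → Matrix (Fin n) (Fin n) ℂ),
      (∀ l, s l ∈ S ∧ IsPosElem (s l)) ∧ (∀ l, IsPosElem (x l)) ∧
      T = ∑ l, Matrix.of fun p q => x l p q • s l }

section PosElem

lemma IsPosElem.isSelfAdjoint {R : Type*} [Ring R] [StarRing R] {x : R} (hx : IsPosElem x) :
    IsSelfAdjoint x := by
  obtain ⟨b, rfl⟩ := hx
  exact .star_mul_self b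

lemma isPosElem_zero {R : Type*} [Ring R] [StarRing R] : IsPosElem (0 : R) := ⟨0, by simp⟩

lemma isPosElem_one {R : Type*} [Ring R] [StarRing R] : IsPosElem (1 : R) := ⟨1, by simp⟩

lemma IsPosElem.real_smul {R : Type*} [Ring R] [StarRing R] [Algebra ℂ R] [StarModule ℂ R]
    {x : R} (hx : IsPosElem x) {c : ℝ} (hc : 0 ≤ c) : IsPosElem ((c : ℂ) • x) := by
  obtain ⟨b, rfl⟩ := hx
  refine ⟨((√c : ℝ) : ℂ) • b, ?_⟩
  rw [star_smul, smul_mul_smul_comm, Complex.star_def, Complex.conj_ofReal, ← Complex.ofReal_mul,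
    Real.mul_self_sqrt hc]

lemma isPosElem_map_iff {R R' : Type*} [Ring R] [StarRing R] [Ring R'] [StarRing R']
    (e : R ≃⋆+* R') {x : R} : IsPosElem (e x) ↔ IsPosElem x := by
  constructor
  · rintro ⟨b, hb⟩
    exact ⟨e.symm b, by rw [← map_star, ← map_mul, ← hb, e.symm_apply_apply]⟩
  · rintro ⟨b, rfl⟩
    exact ⟨e b, by rw [map_mul, map_star]⟩

lemma isPosElem_prod_iff {R R' : Type*} [Ring R] [StarRing R] [Ring R'] [StarRing R']
    {p : R × R'} : IsPosElem p ↔ IsPosElem p.1 ∧ IsPosElem p.2 :=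
  ⟨fun ⟨b, hb⟩ => ⟨⟨b.1, congrArg Prod.fst hb⟩, ⟨b.2, congrArg Prod.snd hb⟩⟩,
    fun ⟨⟨b, hb⟩, ⟨c, hc⟩⟩ => ⟨(b, c), Prod.ext hb hc⟩⟩

lemma isPosElem_iff_nonneg {B : Type*} [CStarAlgebra B] [PartialOrder B] [StarOrderedRing B]
    {x : B} : IsPosElem x ↔ 0 ≤ x :=
  CStarAlgebra.nonneg_iff_eq_star_mul_self.symm

lemma isPosElem_iff_posSemidef {ι : Type*} [Fintype ι] [DecidableEq ι] {x : Matrix ι ι ℂ} :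
    IsPosElem x ↔ x.PosSemidef := by
  open scoped MatrixOrder Matrix.Norms.L2Operator in
  rw [isPosElem_iff_nonneg, Matrix.nonneg_iff_posSemidef]

lemma isPosElem_iff_posSemidef_comp {ι κ : Type*} [Fintype ι] [DecidableEq ι] [Fintype κ]
    [DecidableEq κ] {x : Matrix ι ι (Matrix κ κ ℂ)} :
    IsPosElem x ↔ (Matrix.comp ι ι κ κ ℂ x).PosSemidef := by
  let e : Matrix ι ι (Matrix κ κ ℂ) ≃⋆+* Matrix (ι × κ) (ι × κ) ℂ :=
    { Matrix.compRingEquiv ι κ ℂ with map_star' := fun b => (Matrix.conjTranspose_comp' b).symm }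
  exact (isPosElem_map_iff e).symm.trans isPosElem_iff_posSemidef

lemma isPosElem_vecMulVec_star {R ι : Type*} [Ring R] [StarRing R] [Fintype ι] [DecidableEq ι]
    (r : ι → R) : IsPosElem (Matrix.vecMulVec (star r) r) := by
  rcases isEmpty_or_nonempty ι with _ | ⟨⟨i⟩⟩
  · exact ⟨0, Subsingleton.elim _ _⟩
  · refine ⟨Matrix.updateRow 0 i r, ?_⟩
    ext p q
    simp [Matrix.mul_apply, Matrix.vecMulVec_apply, Matrix.updateRow_apply, apply_ite]

end PosElem

/-- A complex `*`-algebra whose positive elements form a convex cone having `1` as order unit.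
This is all that the extension of positive functionals needs; it covers matrix algebras over a
C⋆-algebra, on which Mathlib puts no norm. -/
class OrderUnitStarAlgebra (R : Type*) [Ring R] [StarRing R] [Algebra ℂ R] : Prop where
  isPosElem_add {x y : R} : IsPosElem x → IsPosElem y → IsPosElem (x + y)
  exists_isPosElem_smul_one_add {x : R} :
    IsSelfAdjoint x → ∃ c : ℝ, IsPosElem ((c : ℂ) • (1 : R) + x)

namespace OrderUnitStarAlgebra

variable {R R' : Type*} [Ring R] [StarRing R] [Algebra ℂ R] [OrderUnitStarAlgebra R]
  [Ring R'] [StarRing R'] [Algebra ℂ R'] [OrderUnitStarAlgebra R']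

lemma isPosElem_sum {ι : Type*} {s : Finset ι} {x : ι → R} (hx : ∀ i ∈ s, IsPosElem (x i)) :
    IsPosElem (∑ i ∈ s, x i) :=
  Finset.sum_induction x IsPosElem (fun _ _ => isPosElem_add) isPosElem_zero hx

lemma eventually_isPosElem_smul_one_add [StarModule ℂ R] {x : R} (hx : IsSelfAdjoint x) :
    ∀ᶠ c : ℝ in Filter.atTop, IsPosElem ((c : ℂ) • (1 : R) + x) := by
  obtain ⟨c, hc⟩ := exists_isPosElem_smul_one_add hx
  filter_upwards [Filter.eventually_ge_atTop c] with d hd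
  have := isPosElem_add ((isPosElem_one (R := R)).real_smul (sub_nonneg.mpr hd)) hc
  rwa [← add_assoc, ← add_smul, Complex.ofReal_sub, sub_add_cancel] at this

instance [StarModule ℂ R] [StarModule ℂ R'] : OrderUnitStarAlgebra (R × R') where
  isPosElem_add hx hy := by
    rw [isPosElem_prod_iff] at hx hy ⊢
    exact ⟨isPosElem_add hx.1 hy.1, isPosElem_add hx.2 hy.2⟩
  exists_isPosElem_smul_one_add hx := by
    obtain ⟨c, h₁, h₂⟩ :=
      ((eventually_isPosElem_smul_one_add (congrArg Prod.fst hx)).and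
        (eventually_isPosElem_smul_one_add (congrArg Prod.snd hx))).exists
    exact ⟨c, isPosElem_prod_iff.mpr ⟨h₁, h₂⟩⟩

instance {B : Type*} [CStarAlgebra B] : OrderUnitStarAlgebra B where
  isPosElem_add hx hy := by
    let _ := CStarAlgebra.spectralOrder B
    have _ := CStarAlgebra.spectralOrderedRing B
    rw [isPosElem_iff_nonneg] at hx hy ⊢
    exact add_nonneg hx hy
  exists_isPosElem_smul_one_add {x} hx := by
    let _ := CStarAlgebra.spectralOrder B
    have _ := CStarAlgebra.spectralOrderedRing B
    refine ⟨‖x‖, isPosElem_iff_nonneg.mpr ?_⟩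
    have := hx.neg.le_algebraMap_norm_self
    rwa [norm_neg, neg_le_iff_add_nonneg, Algebra.algebraMap_eq_smul_one,
      ← Complex.coe_smul] at this

instance {ι A : Type*} [Fintype ι] [DecidableEq ι] [NormedRing A] [StarRing A] [CStarRing A]
    [CompleteSpace A] [NormedAlgebra ℂ A] [StarModule ℂ A] :
    OrderUnitStarAlgebra (Matrix ι ι A) :=
  let _ : CStarAlgebra A := {}
  let _ := CStarAlgebra.spectralOrder A
  have _ := CStarAlgebra.spectralOrderedRing A
  inferInstanceAs (OrderUnitStarAlgebra (CStarMatrix ι ι A))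

end OrderUnitStarAlgebra

lemma isPosElem_conjTranspose_mul_self {R ι κ : Type*} [Ring R] [StarRing R] [Algebra ℂ R]
    [Fintype ι] [Fintype κ] [DecidableEq κ] [OrderUnitStarAlgebra (Matrix κ κ R)]
    (c : Matrix ι κ R) : IsPosElem (cᴴ * c) := by
  have sum_rows : cᴴ * c = ∑ k, Matrix.vecMulVec (star (c k)) (c k) := by
    ext p q
    simp [Matrix.mul_apply, Matrix.sum_apply, Matrix.vecMulVec_apply]
  rw [sum_rows]
  exact OrderUnitStarAlgebra.isPosElem_sum fun k _ => isPosElem_vecMulVec_star (c k)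

section OperatorSystem

/-- An operator system: a unital self-adjoint subspace. It is stated for any complex `*`-algebra so
that it also applies inside `Mₙ(𝒜) ⊕ Mₙ(𝒜)`, without a norm. -/
structure IsOperatorSystem {R : Type*} [Ring R] [StarRing R] [Algebra ℂ R]
    (T : Submodule ℂ R) : Prop where
  one_mem : 1 ∈ T
  star_mem : ∀ x ∈ T, star x ∈ T

namespace IsOperatorSystem

variable {R : Type*} [Ring R] [StarRing R] [Algebra ℂ R] [StarModule ℂ R] {T : Submodule ℂ R}

lemma realPart_mem (hT : IsOperatorSystem T) {x : R} (hx : x ∈ T) : (realPart x : R) ∈ T := by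
  rw [realPart_apply_coe, ← Complex.coe_smul]
  exact T.smul_mem _ (T.add_mem hx (hT.star_mem x hx))

lemma imaginaryPart_mem (hT : IsOperatorSystem T) {x : R} (hx : x ∈ T) :
    (imaginaryPart x : R) ∈ T := by
  have := hT.realPart_mem (T.smul_mem (-Complex.I) hx)
  rwa [neg_smul, map_neg, realPart_I_smul, neg_neg] at this

lemma realPart_add_I_smul_imaginaryPart (hT : IsOperatorSystem T) (x : T) :
    (⟨realPart (x : R), hT.realPart_mem x.2⟩ : T) +
      Complex.I • (⟨imaginaryPart (x : R), hT.imaginaryPart_mem x.2⟩ : T) = x :=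
  Subtype.ext (_root_.realPart_add_I_smul_imaginaryPart (x : R))

end IsOperatorSystem

end OperatorSystem

section HermitianExtension

variable {V : Type*} [AddCommGroup V] [Module ℂ V] [StarAddMonoid V] [StarModule ℂ V]

/-- The Hermitian complex functional `x ↦ g (Re x) + i g (Im x)` determined by a real functional
`g` on the self-adjoint elements. -/
noncomputable def hermitianExtension (g : Module.Dual ℝ (selfAdjoint V)) : V →ₗ[ℂ] ℂ :=
  Module.Dual.extendRCLike (𝕜 := ℂ) (g ∘ₗ realPart)

lemma hermitianExtension_apply (g : Module.Dual ℝ (selfAdjoint V)) (x : V) :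
    hermitianExtension g x = g (realPart x) + Complex.I * g (imaginaryPart x) := by
  simp [hermitianExtension, Module.Dual.extendRCLike_apply]

lemma hermitianExtension_coe (g : Module.Dual ℝ (selfAdjoint V)) (x : selfAdjoint V) :
    hermitianExtension g x = g x := by
  simp [hermitianExtension_apply]

theorem exists_functional_nonneg_of_notMem_closure [TopologicalSpace V] [IsTopologicalAddGroup V]
    [ContinuousSMul ℝ V] [LocallyConvexSpace ℝ V] (C : PointedCone ℝ V)
    (hC : ∀ x ∈ C, IsSelfAdjoint x) {x : V} (hx : IsSelfAdjoint x)
    (hxC : x ∉ closure (C : Set V)) :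
    ∃ F : V →ₗ[ℂ] ℂ, (∀ y ∈ C, 0 ≤ F y) ∧ F x < 0 := by
  obtain ⟨f, hf, hfx⟩ := ProperCone.hyperplane_separation_point (Submodule.closure C) hxC
  let g : Module.Dual ℝ (selfAdjoint V) := f.toLinearMap ∘ₗ (selfAdjoint.submodule ℝ V).subtype
  have hg {y : V} (hy : IsSelfAdjoint y) : hermitianExtension g y = (f y : ℂ) :=
    hermitianExtension_coe g ⟨y, hy⟩
  refine ⟨hermitianExtension g, fun y hy => ?_, ?_⟩
  · rw [hg (hC y hy)]
    exact Complex.zero_le_real.mpr (hf y (subset_closure hy))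
  · rw [hg hx]
    exact_mod_cast hfx

end HermitianExtension

section PositiveExtension

variable {R : Type*} [Ring R] [StarRing R] [Algebra ℂ R] [OrderUnitStarAlgebra R]
  {T : Submodule ℂ R} {f : T →ₗ[ℂ] ℂ}

lemma im_apply_eq_zero_of_isSelfAdjoint (hT : IsOperatorSystem T)
    (hf : ∀ x : T, IsPosElem (x : R) → 0 ≤ f x) {x : T} (hx : IsSelfAdjoint (x : R)) :
    (f x).im = 0 := by
  obtain ⟨c, hc⟩ := OrderUnitStarAlgebra.exists_isPosElem_smul_one_add hx
  let e : T := ⟨1, hT.one_mem⟩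
  have h_one : (f e).im = 0 := (Complex.nonneg_iff.mp (hf e isPosElem_one)).2.symm
  have h_add : (f ((c : ℂ) • e + x)).im = 0 :=
    (Complex.nonneg_iff.mp (hf ((c : ℂ) • e + x) hc)).2.symm
  simpa [h_one] using h_add

variable [StarModule ℂ R]

variable (R) in
/-- The positive elements, as a cone in the real vector space of self-adjoint elements, where the
real extension theorem of M. Riesz is applied. -/
def selfAdjointPosCone : PointedCone ℝ (selfAdjoint R) where
  carrier := {x | IsPosElem (x : R)}
  zero_mem' := isPosElem_zero
  add_mem' := OrderUnitStarAlgebra.isPosElem_add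
  smul_mem' c _ hx := by simpa only [Complex.coe_smul] using! hx.real_smul c.2

/-- M. Krein's extension theorem: since `T` contains the order unit `1`, the theorem of M. Riesz
applies on the real space of self-adjoint elements. -/
theorem exists_nonneg_extension (hT : IsOperatorSystem T)
    (hf : ∀ x : T, IsPosElem (x : R) → 0 ≤ f x) :
    ∃ F : R →ₗ[ℂ] ℂ, (∀ x : T, F x = f x) ∧ ∀ x, IsPosElem x → 0 ≤ F x := by
  let i := (selfAdjoint.submodule ℝ R).subtype
  let f_re : ((T.restrictScalars ℝ).comap i) →ₗ[ℝ] ℝ :=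
    Complex.reLm ∘ₗ f.restrictScalars ℝ ∘ₗ i.submoduleComap (T.restrictScalars ℝ)
  obtain ⟨g, hgf, hg⟩ := riesz_extension (selfAdjointPosCone R) ⟨_, f_re⟩
    (fun x hx => (Complex.nonneg_iff.mp (hf ⟨x, x.2⟩ hx)).1)
    (fun y => by
      obtain ⟨c, hc⟩ := OrderUnitStarAlgebra.exists_isPosElem_smul_one_add y.2
      refine ⟨⟨c • 1, ?_⟩, ?_⟩
      · simpa only [Complex.coe_smul] using! T.smul_mem (c : ℂ) hT.one_mem
      · simpa only [Complex.coe_smul] using! hc)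
  have hg_re (x : selfAdjoint R) (hx : (x : R) ∈ T) : (g x : ℂ) = f ⟨x, hx⟩ :=
    Complex.ext (hgf ⟨x, hx⟩) (im_apply_eq_zero_of_isSelfAdjoint hT hf (x := ⟨x, hx⟩) x.2).symm
  refine ⟨hermitianExtension g, fun x => ?_, fun x hx => ?_⟩
  · rw [hermitianExtension_apply, hg_re _ (hT.realPart_mem x.2),
      hg_re _ (hT.imaginaryPart_mem x.2), ← smul_eq_mul, ← map_smul, ← map_add,
      hT.realPart_add_I_smul_imaginaryPart]
  · rw [hermitianExtension_coe g ⟨x, hx.isSelfAdjoint⟩]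
    exact Complex.zero_le_real.mpr (hg _ hx)

end PositiveExtension

section Boundedness

variable {B M : Type*} [CStarAlgebra B] [CStarAlgebra M] {T : Submodule ℂ B} {φ : T →ₗ[ℂ] M}

lemma norm_map_le_of_isSelfAdjoint (h_one : 1 ∈ T)
    (hφ : ∀ x : T, IsPosElem (x : B) → IsPosElem (φ x)) {x : T} (hx : IsSelfAdjoint (x : B)) :
    ‖φ x‖ ≤ 3 * ‖φ ⟨1, h_one⟩‖ * ‖x‖ := by
  let _ := CStarAlgebra.spectralOrder M
  have _ := CStarAlgebra.spectralOrderedRing M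
  let _ := CStarAlgebra.spectralOrder B
  have _ := CStarAlgebra.spectralOrderedRing B
  let u : T := (‖x‖ : ℂ) • ⟨1, h_one⟩
  have h_norm_u : ‖φ u‖ = ‖φ ⟨1, h_one⟩‖ * ‖x‖ := by
    rw [map_smul, norm_smul, Complex.norm_real, norm_norm, mul_comm]
  have h_coe_u : (u : B) = algebraMap ℝ B ‖(x : B)‖ :=
    (Algebra.algebraMap_eq_smul_one (A := B) ‖x‖).symm
  have map_nonneg {y : T} (hy : 0 ≤ (y : B)) : 0 ≤ φ y :=
    isPosElem_iff_nonneg.mp (hφ y (isPosElem_iff_nonneg.mpr hy))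
  have h_lower : 0 ≤ φ x + φ u := by
    rw [← map_add]
    refine map_nonneg ?_
    rw [Submodule.coe_add, h_coe_u, ← neg_le_iff_add_nonneg', ← norm_neg]
    exact hx.neg.le_algebraMap_norm_self
  have h_upper : φ x + φ u ≤ φ u + φ u := by
    rw [add_le_add_iff_right, ← sub_nonneg, ← map_sub]
    refine map_nonneg ?_
    rw [Submodule.coe_sub, h_coe_u, sub_nonneg]
    exact hx.le_algebraMap_norm_self
  calc ‖φ x‖ = ‖φ x + φ u - φ u‖ := by rw [add_sub_cancel_right]
    _ ≤ ‖φ x + φ u‖ + ‖φ u‖ := norm_sub_le _ _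
    _ ≤ ‖φ u + φ u‖ + ‖φ u‖ := by
      gcongr
      exact CStarAlgebra.norm_le_norm_of_nonneg_of_le h_lower h_upper
    _ ≤ ‖φ u‖ + ‖φ u‖ + ‖φ u‖ := by
      gcongr
      exact norm_add_le _ _
    _ = 3 * ‖φ ⟨1, h_one⟩‖ * ‖x‖ := by rw [h_norm_u]; ring

theorem continuous_of_map_isPosElem (hT : IsOperatorSystem T)
    (hφ : ∀ x : T, IsPosElem (x : B) → IsPosElem (φ x)) : Continuous φ := by
  refine (φ.mkContinuous (2 * (3 * ‖φ ⟨1, hT.one_mem⟩‖)) fun x => ?_).continuous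
  set C := 3 * ‖φ ⟨1, hT.one_mem⟩‖
  let a : T := ⟨realPart (x : B), hT.realPart_mem x.2⟩
  let b : T := ⟨imaginaryPart (x : B), hT.imaginaryPart_mem x.2⟩
  have h_norm_a : ‖a‖ ≤ ‖x‖ := realPart.norm_le (x : B)
  have h_norm_b : ‖b‖ ≤ ‖x‖ := imaginaryPart.norm_le (x : B)
  calc ‖φ x‖ = ‖φ a + Complex.I • φ b‖ := by
        rw [← map_smul, ← map_add, hT.realPart_add_I_smul_imaginaryPart]
    _ ≤ ‖φ a‖ + ‖φ b‖ := by simpa [norm_smul] using norm_add_le (φ a) (Complex.I • φ b)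
    _ ≤ C * ‖a‖ + C * ‖b‖ := add_le_add
        (norm_map_le_of_isSelfAdjoint hT.one_mem hφ (realPart (x : B)).2)
        (norm_map_le_of_isSelfAdjoint hT.one_mem hφ (imaginaryPart (x : B)).2)
    _ ≤ C * ‖x‖ + C * ‖x‖ := by gcongr
    _ = 2 * C * ‖x‖ := by ring

end Boundedness

section Duality

variable {E : Type*} [NormedRing E] [NormedAlgebra ℂ E] {S : Submodule ℂ E} {n : ℕ}

lemma dualFunc_add (φ ψ : S →ₗ[ℂ] Matrix (Fin n) (Fin n) ℂ) (s : Matrix (Fin n) (Fin n) S) :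
    dualFunc (φ + ψ) s = dualFunc φ s + dualFunc ψ s := by
  simp [dualFunc, Finset.sum_add_distrib]

lemma dualFunc_single (φ : S →ₗ[ℂ] Matrix (Fin n) (Fin n) ℂ) (i j : Fin n) (a : S) :
    dualFunc φ (Matrix.single i j a) = φ a i j := by
  rw [dualFunc, Fintype.sum_eq_single i, Fintype.sum_eq_single j, Matrix.single_apply_same]
  · intro q hq
    simp [hq.symm]
  · intro p hp
    simp [hp.symm]

lemma dualFunc_injective :
    Function.Injective (dualFunc : (S →ₗ[ℂ] Matrix (Fin n) (Fin n) ℂ) → _) := by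
  intro φ ψ h
  ext a i j
  rw [← dualFunc_single, h, dualFunc_single]

lemma dualFunc_map_smul (φ : S →ₗ[ℂ] Matrix (Fin n) (Fin n) ℂ) (x : Matrix (Fin n) (Fin n) ℂ)
    (a : S) : dualFunc φ (x.map (· • a)) = ∑ p, ∑ q, x p q * φ a p q := by
  simp [dualFunc]

/-- The functional `s_φ` on `Mₙ(S)` as a linear map, to which extension theorems apply. -/
noncomputable def dualFuncₗ (φ : S →ₗ[ℂ] Matrix (Fin n) (Fin n) ℂ) :
    Matrix (Fin n) (Fin n) S →ₗ[ℂ] ℂ where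
  toFun := dualFunc φ
  map_add' := by simp [dualFunc, Finset.sum_add_distrib]
  map_smul' := by simp [dualFunc, Finset.mul_sum]

/-- The map `M → Mₙ(ℂ)`, `a ↦ [F (a ⊗ e_{ij})]`, attached to a functional `F` on `Mₙ(M)`. It
inverts `φ ↦ s_φ`. -/
noncomputable def mapOfFunctional {M ι : Type*} [AddCommMonoid M] [Module ℂ M] [DecidableEq ι]
    (F : Matrix ι ι M →ₗ[ℂ] ℂ) : M →ₗ[ℂ] Matrix ι ι ℂ where
  toFun a := Matrix.of fun i j => F (Matrix.single i j a)
  map_add' a b := by ext; simp [Matrix.single_add]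
  map_smul' c a := by ext; simp [← Matrix.smul_single]

lemma dualFunc_mapOfFunctional (F : Matrix (Fin n) (Fin n) S →ₗ[ℂ] ℂ)
    (s : Matrix (Fin n) (Fin n) S) : dualFunc (mapOfFunctional F) s = F s := by
  conv_rhs => rw [Matrix.matrix_eq_sum_single s]
  simp [dualFunc, mapOfFunctional]

end Duality

section PositiveMaps

/-- Over `ℂ`, nonnegativity of the quadratic form already forces the matrix to be Hermitian. -/
lemma posSemidef_of_dotProduct_mulVec_nonneg {ι : Type*} [Fintype ι] {M : Matrix ι ι ℂ}
    (h : ∀ v : ι → ℂ, 0 ≤ star v ⬝ᵥ (M *ᵥ v)) : M.PosSemidef := by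
  classical
  rw [← Matrix.isPositive_toEuclideanLin_iff, LinearMap.isPositive_iff_complex]
  intro x
  have hx : 0 ≤ inner ℂ (M.toEuclideanLin x) x := by
    rw [← inner_conj_symm, EuclideanSpace.inner_eq_star_dotProduct,
      Matrix.ofLp_toLpLin, Matrix.toLin'_apply, dotProduct_comm]
    exact star_nonneg_iff.mpr (h _)
  obtain ⟨h_re, h_im⟩ := Complex.nonneg_iff.mp hx
  exact ⟨Complex.ext (by simp) (by simpa using h_im), by simpa using h_re⟩

lemma sum_mul_nonneg_of_posSemidef {ι : Type*} [Fintype ι] {x y : Matrix ι ι ℂ}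
    (hx : x.PosSemidef) (hy : y.PosSemidef) : 0 ≤ ∑ p, ∑ q, x p q * y p q := by
  simpa [dotProduct, Matrix.mulVec] using (hx.hadamard hy).dotProduct_mulVec_nonneg 1

variable {E : Type*} [NormedRing E] [StarRing E] [NormedAlgebra ℂ E] {S : Submodule ℂ E} {n : ℕ}

lemma map_smul_mem_posCone {x : Matrix (Fin n) (Fin n) ℂ} (hx : IsPosElem x) {a : S}
    (ha : IsPosElem (a : E)) : matCoe (x.map (· • a)) ∈ posCone S n :=
  ⟨1, fun _ => a, fun _ => x, fun _ => ⟨a.2, ha⟩, fun _ => hx, by ext; simp [matCoe]⟩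

lemma exists_eq_sum_of_matCoe_mem_posCone {s : Matrix (Fin n) (Fin n) S}
    (hs : matCoe s ∈ posCone S n) :
    ∃ (k : ℕ) (a : Fin k → S) (x : Fin k → Matrix (Fin n) (Fin n) ℂ),
      (∀ l, IsPosElem (a l : E)) ∧ (∀ l, IsPosElem (x l)) ∧ s = ∑ l, (x l).map (· • a l) := by
  obtain ⟨k, a, x, ha, hx, h_sum⟩ := hs
  refine ⟨k, fun l => ⟨a l, (ha l).1⟩, x, fun l => (ha l).2, hx, ?_⟩
  ext p q
  have := congrFun (congrFun h_sum p) q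
  rw [Matrix.sum_apply] at this
  simpa [matCoe, Matrix.sum_apply] using this

theorem isPosMap_iff_dualFunc_nonneg {φ : S →ₗ[ℂ] Matrix (Fin n) (Fin n) ℂ} :
    IsPosMap φ ↔ ∀ s, matCoe s ∈ posCone S n → 0 ≤ dualFunc φ s := by
  constructor
  · intro hφ s hs
    obtain ⟨k, a, x, ha, hx, rfl⟩ := exists_eq_sum_of_matCoe_mem_posCone hs
    change 0 ≤ dualFuncₗ φ _
    rw [map_sum]
    refine Finset.sum_nonneg fun l _ => ?_
    change 0 ≤ dualFunc φ _
    rw [dualFunc_map_smul]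
    exact sum_mul_nonneg_of_posSemidef (isPosElem_iff_posSemidef.mp (hx l))
      (isPosElem_iff_posSemidef.mp (hφ _ (ha l)))
  · intro h a ha
    rw [isPosElem_iff_posSemidef]
    refine posSemidef_of_dotProduct_mulVec_nonneg fun v => ?_
    have h_rank_one : IsPosElem (Matrix.vecMulVec (star v) v) := isPosElem_vecMulVec_star v
    have := h _ (map_smul_mem_posCone h_rank_one ha)
    rw [dualFunc_map_smul] at this
    convert! this using 1
    simp only [dotProduct, Matrix.mulVec, Finset.mul_sum, Matrix.vecMulVec_apply, mul_assoc]
    simp only [mul_comm (v _)]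

end PositiveMaps

section CompletelyPositiveMaps

/-- The compression `wᴴ s w` of a matrix over a complex vector space by a scalar matrix `w`. It
reduces complete positivity to a condition on `n × n` matrices over `S`. -/
def compress {M ι κ : Type*} [AddCommMonoid M] [Module ℂ M] [Fintype ι] (w : Matrix ι κ ℂ)
    (s : Matrix ι ι M) : Matrix κ κ M :=
  Matrix.of fun p q => ∑ j, ∑ k, (star (w j p) * w k q) • s j k

lemma compress_one {M ι : Type*} [AddCommMonoid M] [Module ℂ M] [Fintype ι] [DecidableEq ι]
    (s : Matrix ι ι M) : compress 1 s = s := by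
  ext p q
  simp [compress, Matrix.one_apply, apply_ite]

lemma compress_eq_mul {R ι κ : Type*} [Ring R] [StarRing R] [Algebra ℂ R] [StarModule ℂ R]
    [Fintype ι] (w : Matrix ι κ ℂ) (s : Matrix ι ι R) :
    compress w s = (w.map (algebraMap ℂ R))ᴴ * s * w.map (algebraMap ℂ R) := by
  ext p q
  simp only [compress, Matrix.of_apply, Matrix.mul_apply, Matrix.conjTranspose_apply,
    Matrix.map_apply, Finset.sum_mul, ← algebraMap_star_comm]
  rw [Finset.sum_comm]
  refine Finset.sum_congr rfl fun k _ => Finset.sum_congr rfl fun j _ => ?_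
  rw [Algebra.smul_def, map_mul, mul_assoc, Algebra.commutes (w k q), ← mul_assoc]

lemma IsPosElem.compress {R ι κ : Type*} [Ring R] [StarRing R] [Algebra ℂ R] [StarModule ℂ R]
    [Fintype ι] [DecidableEq ι] [Fintype κ] [DecidableEq κ] [OrderUnitStarAlgebra (Matrix κ κ R)]
    {s : Matrix ι ι R} (hs : IsPosElem s) (w : Matrix ι κ ℂ) : IsPosElem (compress w s) := by
  obtain ⟨b, rfl⟩ := hs
  rw [compress_eq_mul, Matrix.star_eq_conjTranspose, ← Matrix.mul_assoc, Matrix.mul_assoc,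
    ← Matrix.conjTranspose_mul]
  exact isPosElem_conjTranspose_mul_self _

lemma matCoe_compress {E : Type*} [NormedRing E] [NormedAlgebra ℂ E] {S : Submodule ℂ E} {m n : ℕ}
    (w : Matrix (Fin m) (Fin n) ℂ) (s : Matrix (Fin m) (Fin m) S) :
    matCoe (compress w s) = compress w (matCoe s) := by
  ext p q
  simp [matCoe, compress]

lemma dualFunc_compress {E : Type*} [NormedRing E] [NormedAlgebra ℂ E] {S : Submodule ℂ E}
    {m n : ℕ} (φ : S →ₗ[ℂ] Matrix (Fin n) (Fin n) ℂ) (w : Matrix (Fin m) (Fin n) ℂ)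
    (s : Matrix (Fin m) (Fin m) S) :
    dualFunc φ (compress w s) = star (fun i : Fin m × Fin n => w i.1 i.2) ⬝ᵥ
      (Matrix.comp _ _ _ _ ℂ (s.map φ) *ᵥ fun i => w i.1 i.2) := by
  simp only [dualFunc, compress, Matrix.of_apply, map_sum, map_smul, Matrix.sum_apply,
    Matrix.smul_apply, smul_eq_mul, dotProduct, Matrix.mulVec, Fintype.sum_prod_type,
    Finset.mul_sum, Matrix.comp_apply, Matrix.map_apply, Pi.star_apply]
  conv_rhs => rw [Finset.sum_comm]
  refine Finset.sum_congr rfl fun p _ => ?_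
  rw [Finset.sum_comm]
  refine Finset.sum_congr rfl fun j _ => ?_
  rw [Finset.sum_comm]
  refine Finset.sum_congr rfl fun q _ => Finset.sum_congr rfl fun k _ => ?_
  ring

lemma IsCPMap.dualFunc_nonneg {E : Type*} [NormedRing E] [StarRing E] [NormedAlgebra ℂ E]
    {S : Submodule ℂ E} {n : ℕ} {φ : S →ₗ[ℂ] Matrix (Fin n) (Fin n) ℂ} (hφ : IsCPMap φ)
    {s : Matrix (Fin n) (Fin n) S} (hs : IsPosElem (matCoe s)) : 0 ≤ dualFunc φ s := by
  rw [← compress_one s, dualFunc_compress]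
  exact (isPosElem_iff_posSemidef_comp.mp (hφ n s hs)).dotProduct_mulVec_nonneg _

variable {S : Submodule ℂ A} {n : ℕ} {φ : S →ₗ[ℂ] Matrix (Fin n) (Fin n) ℂ}

theorem isCPMap_iff_dualFunc_nonneg :
    IsCPMap φ ↔ ∀ s, IsPosElem (matCoe s) → 0 ≤ dualFunc φ s := by
  refine ⟨fun hφ s => hφ.dualFunc_nonneg, fun h m s hs => ?_⟩
  rw [isPosElem_iff_posSemidef_comp]
  refine posSemidef_of_dotProduct_mulVec_nonneg fun v => ?_
  have := h (compress (Matrix.of fun j p => v (j, p)) s) (by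
    rw [matCoe_compress]
    exact hs.compress _)
  rwa [dualFunc_compress] at this

theorem isCoCPMap_iff_dualFunc_nonneg :
    IsCoCPMap φ ↔ ∀ s, IsPosElem (matCoe s)ᵀ → 0 ≤ dualFunc φ s := by
  let φt := (Matrix.transposeLinearEquiv (Fin n) (Fin n) ℂ ℂ).toLinearMap ∘ₗ φ
  have h_dual (s : Matrix (Fin n) (Fin n) S) : dualFunc φt sᵀ = dualFunc φ s := Finset.sum_comm
  have h_cp : IsCoCPMap φ ↔ IsCPMap φt := Iff.rfl
  rw [h_cp, isCPMap_iff_dualFunc_nonneg]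
  exact ⟨fun h s hs => h_dual s ▸ h sᵀ hs, fun h s hs => h_dual sᵀ ▸ h sᵀ hs⟩

end CompletelyPositiveMaps

section Decomposable

/-- The map `x ↦ (x, xᵀ)` of `Mₙ(S)` into `Mₙ(𝒜) ⊕ Mₙ(𝒜)`, under which `Jₙ(S)` is the preimage
of the positive elements. -/
noncomputable def prodTranspose {E : Type*} [NormedRing E] [NormedAlgebra ℂ E]
    (S : Submodule ℂ E) (n : ℕ) :
    Matrix (Fin n) (Fin n) S →ₗ[ℂ] Matrix (Fin n) (Fin n) E × Matrix (Fin n) (Fin n) E :=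
  S.subtype.mapMatrix.prod
    ((Matrix.transposeLinearEquiv (Fin n) (Fin n) ℂ E).toLinearMap ∘ₗ S.subtype.mapMatrix)

lemma prodTranspose_injective {E : Type*} [NormedRing E] [NormedAlgebra ℂ E] (S : Submodule ℂ E)
    (n : ℕ) : Function.Injective (prodTranspose S n) := fun _ _ h =>
  Matrix.map_injective Subtype.val_injective (congrArg Prod.fst h)

lemma isOperatorSystem_range_prodTranspose {E : Type*} [NormedRing E] [StarRing E]
    [NormedAlgebra ℂ E] {S : Submodule ℂ E} (hS : IsOperatorSystem S) (n : ℕ) :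
    IsOperatorSystem (LinearMap.range (prodTranspose S n)) where
  one_mem := by
    have h_one : S.subtype.mapMatrix (Matrix.diagonal fun _ : Fin n => ⟨1, hS.one_mem⟩) = 1 :=
      (Matrix.diagonal_map rfl).trans Matrix.diagonal_one
    exact ⟨_, Prod.ext h_one ((congrArg Matrix.transpose h_one).trans Matrix.transpose_one)⟩
  star_mem := by
    rintro _ ⟨s, rfl⟩
    exact ⟨Matrix.of fun i j => ⟨star (s j i : E), hS.star_mem _ (s j i).2⟩, rfl⟩

variable {S : Submodule ℂ A} {n : ℕ}

theorem exists_nonneg_add_of_nonneg_on_memJ (hS : IsOperatorSystem S)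
    (f : Matrix (Fin n) (Fin n) S →ₗ[ℂ] ℂ) (hf : ∀ s, memJ s → 0 ≤ f s) :
    ∃ F₁ F₂ : Matrix (Fin n) (Fin n) A →ₗ[ℂ] ℂ, (∀ x, IsPosElem x → 0 ≤ F₁ x) ∧
      (∀ x, IsPosElem x → 0 ≤ F₂ x) ∧ ∀ s, f s = F₁ (matCoe s) + F₂ (matCoe s)ᵀ := by
  let e := LinearEquiv.ofInjective (prodTranspose S n) (prodTranspose_injective S n)
  obtain ⟨F, hFf, hF⟩ := exists_nonneg_extension (f := f ∘ₗ e.symm.toLinearMap)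
    (isOperatorSystem_range_prodTranspose hS n) fun x hx => by
      obtain ⟨s, rfl⟩ := e.surjective x
      rw [LinearMap.comp_apply, LinearEquiv.coe_coe, e.symm_apply_apply]
      exact hf s (isPosElem_prod_iff.mp hx)
  refine ⟨F ∘ₗ LinearMap.inl ℂ _ _, F ∘ₗ LinearMap.inr ℂ _ _,
    fun x hx => hF _ (isPosElem_prod_iff.mpr ⟨hx, isPosElem_zero⟩),
    fun x hx => hF _ (isPosElem_prod_iff.mpr ⟨isPosElem_zero, hx⟩), fun s => ?_⟩
  have := hFf (e s)
  rw [LinearMap.comp_apply, LinearEquiv.coe_coe, e.symm_apply_apply] at this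
  rw [← this, LinearMap.comp_apply, LinearMap.comp_apply, ← map_add]
  exact congrArg F (Prod.ext (add_zero _).symm (zero_add _).symm)

theorem isDecomposable_iff_dualFunc_nonneg (hS : IsOperatorSystem S)
    {φ : S →ₗ[ℂ] Matrix (Fin n) (Fin n) ℂ} :
    IsDecomposable φ ↔ ∀ s, memJ s → 0 ≤ dualFunc φ s := by
  constructor
  · rintro ⟨ψ, η, hψ, hη, rfl⟩ s hs
    rw [dualFunc_add]
    exact add_nonneg (hψ.dualFunc_nonneg hs.1) (isCoCPMap_iff_dualFunc_nonneg.mp hη s hs.2)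
  · intro h
    obtain ⟨F₁, F₂, hF₁, hF₂, hF⟩ := exists_nonneg_add_of_nonneg_on_memJ hS (dualFuncₗ φ) h
    let ψ := mapOfFunctional (F₁ ∘ₗ S.subtype.mapMatrix)
    let η := mapOfFunctional
      (F₂ ∘ₗ (Matrix.transposeLinearEquiv _ _ ℂ A).toLinearMap ∘ₗ S.subtype.mapMatrix)
    have hψ (s) : dualFunc ψ s = F₁ (matCoe s) := dualFunc_mapOfFunctional _ s
    have hη (s) : dualFunc η s = F₂ (matCoe s)ᵀ := dualFunc_mapOfFunctional _ s
    refine ⟨ψ, η, isCPMap_iff_dualFunc_nonneg.mpr fun s hs => hψ s ▸ hF₁ _ hs,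
      isCoCPMap_iff_dualFunc_nonneg.mpr fun s hs => hη s ▸ hF₂ _ hs,
      dualFunc_injective (funext fun s => ?_)⟩
    rw [dualFunc_add, hψ, hη]
    exact hF s

end Decomposable

section ClosedCone

/-- The cone `S⁺ ⊗ Mₙ(ℂ)⁺` bundled as a real convex cone, for Hahn-Banach separation. -/
def pointedPosCone {E : Type*} [NormedRing E] [StarRing E] [NormedAlgebra ℂ E]
    (S : Submodule ℂ E) (n : ℕ) : PointedCone ℝ (Matrix (Fin n) (Fin n) E) where
  carrier := posCone S n
  zero_mem' := ⟨0, Fin.elim0, Fin.elim0, fun l => l.elim0, fun l => l.elim0, by simp⟩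
  add_mem' := by
    rintro _ _ ⟨k, s, x, hs, hx, rfl⟩ ⟨k', s', x', hs', hx', rfl⟩
    exact ⟨k + k', Fin.append s s', Fin.append x x',
      Fin.addCases (by simpa using hs) (by simpa using hs'),
      Fin.addCases (by simpa using hx) (by simpa using hx'), by simp [Fin.sum_univ_add]⟩
  smul_mem' := by
    rintro ⟨c, hc⟩ _ ⟨k, s, x, hs, hx, rfl⟩
    refine ⟨k, s, fun l => (c : ℂ) • x l, hs, fun l => (hx l).real_smul hc, ?_⟩
    rw [Finset.smul_sum]
    refine Finset.sum_congr rfl fun l _ => ?_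
    ext p q
    change c • (x l p q • s l) = ((c : ℂ) • x l p q) • s l
    rw [smul_assoc, Complex.coe_smul]

lemma isSelfAdjoint_of_mem_posCone {E : Type*} [NormedRing E] [StarRing E] [NormedAlgebra ℂ E]
    [StarModule ℂ E] {S : Submodule ℂ E} {n : ℕ} {x : Matrix (Fin n) (Fin n) E}
    (hx : x ∈ posCone S n) : IsSelfAdjoint x := by
  obtain ⟨k, a, x, ha, hx, rfl⟩ := hx
  refine isSelfAdjoint_sum _ fun l _ => ?_
  ext p q
  rw [Matrix.star_apply, Matrix.of_apply, Matrix.of_apply, star_smul,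
    (ha l).2.isSelfAdjoint.star_eq, ← Matrix.star_apply, (hx l).isSelfAdjoint.star_eq]

lemma isInducing_matCoe {E : Type*} [NormedRing E] [NormedAlgebra ℂ E] (S : Submodule ℂ E)
    (n : ℕ) : Topology.IsInducing (matCoe : Matrix (Fin n) (Fin n) S → _) :=
  .piMap fun _ => .piMap fun _ => .subtypeVal

lemma exists_isPosMap_dualFunc_neg {E : Type*} [NormedRing E] [StarRing E] [NormedAlgebra ℂ E]
    [StarModule ℂ E] {S : Submodule ℂ E} {n : ℕ} {s : Matrix (Fin n) (Fin n) S}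
    (hs : IsSelfAdjoint (matCoe s)) (hs_cone : matCoe s ∉ closure (posCone S n)) :
    ∃ φ : S →ₗ[ℂ] Matrix (Fin n) (Fin n) ℂ, IsPosMap φ ∧ dualFunc φ s < 0 := by
  let _ : LocallyConvexSpace ℝ (Matrix (Fin n) (Fin n) E) :=
    inferInstanceAs (LocallyConvexSpace ℝ (Fin n → Fin n → E))
  obtain ⟨F, hF, hFs⟩ := exists_functional_nonneg_of_notMem_closure (pointedPosCone S n)
    (fun _ => isSelfAdjoint_of_mem_posCone) hs hs_cone
  refine ⟨mapOfFunctional (F ∘ₗ S.subtype.mapMatrix), isPosMap_iff_dualFunc_nonneg.mpr ?_, ?_⟩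
  · intro t ht
    rw [dualFunc_mapOfFunctional]
    exact hF _ ht
  · rw [dualFunc_mapOfFunctional]
    exact hFs

lemma posCone_subset_range_matCoe {E : Type*} [NormedRing E] [StarRing E] [NormedAlgebra ℂ E]
    (S : Submodule ℂ E) (n : ℕ) :
    posCone S n ⊆ Set.range (matCoe : Matrix (Fin n) (Fin n) S → _) := by
  rintro _ ⟨k, a, x, ha, -, rfl⟩
  refine ⟨∑ l, (x l).map (· • ⟨a l, (ha l).1⟩), ?_⟩
  ext p q
  simp [matCoe, Matrix.sum_apply]

variable {S : Submodule ℂ A} {n : ℕ}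

lemma IsPosMap.continuous (hS : IsOperatorSystem S) {φ : S →ₗ[ℂ] Matrix (Fin n) (Fin n) ℂ}
    (hφ : IsPosMap φ) : Continuous φ := by
  let _ : CStarAlgebra A := {}
  open scoped Matrix.Norms.L2Operator in
  exact continuous_of_map_isPosElem hS hφ

lemma IsPosMap.dualFunc_nonneg_of_mem_closure (hS : IsOperatorSystem S)
    {φ : S →ₗ[ℂ] Matrix (Fin n) (Fin n) ℂ} (hφ : IsPosMap φ) {s : Matrix (Fin n) (Fin n) S}
    (hs : matCoe s ∈ closure (posCone S n)) : 0 ≤ dualFunc φ s := by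
  have h_cont : Continuous (dualFunc φ) :=
    continuous_finsetSum _ fun i _ => continuous_finsetSum _ fun j _ =>
      ((hφ.continuous hS).comp (continuous_apply_apply i j)).matrix_elem i j
  have h_mem : s ∈ closure (matCoe ⁻¹' posCone S n) := by
    rw [(isInducing_matCoe S n).closure_eq_preimage_closure_image,
      Set.image_preimage_eq_of_subset (posCone_subset_range_matCoe S n)]
    exact hs
  exact closure_minimal (isPosMap_iff_dualFunc_nonneg.mp hφ)
    (isClosed_le continuous_const h_cont) h_mem

end ClosedCone

/-- every positive map `ψ : S → Mₙ(ℂ)` is decomposable iff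
`Jₙ(S)` is contained in the closure of the cone `S⁺ ⊗ Mₙ(ℂ)⁺` in `Mₙ(𝒜)`. -/
theorem every_posMap_decomposable_iff
    (S : Submodule ℂ A) (h_one : (1 : A) ∈ S) (h_star : ∀ a ∈ S, star a ∈ S)
    (n : ℕ) (hn : 0 < n) :
    (∀ ψ : S →ₗ[ℂ] Matrix (Fin n) (Fin n) ℂ, IsPosMap ψ → IsDecomposable ψ) ↔
      (∀ s : Matrix (Fin n) (Fin n) S, memJ s → matCoe s ∈ closure (posCone S n)) := by
  have hS : IsOperatorSystem S := ⟨h_one, h_star⟩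
  constructor
  · intro h s hs
    by_contra hs_cone
    obtain ⟨φ, hφ, h_neg⟩ := exists_isPosMap_dualFunc_neg hs.1.isSelfAdjoint hs_cone
    exact h_neg.not_ge ((isDecomposable_iff_dualFunc_nonneg hS).mp (h φ hφ) s hs)
  · intro h ψ hψ
    exact (isDecomposable_iff_dualFunc_nonneg hS).mpr fun s hs =>
      hψ.dualFunc_nonneg_of_mem_closure hS (h s hs)
end

section
/- If p, q are positive integers with pq ≤ 6, then J_p(M_q(ℂ)) is contained in the closure of the cone M_q(ℂ)⁺ ⊗ M_p(ℂ)⁺ in M_p(M_q(ℂ)). -/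
/-!
By Krein–Milman, a closed cone of positive matrices lies in the closed convex cone generated by its
extreme rays, so it suffices to see that, for `n ≤ 3`, every extreme ray of the cone of PPT matrices
over `ℂ² ⊗ ℂⁿ` is spanned by a product `x xᴴ ⊗ y yᴴ` (Størmer for `n = 2`, Woronowicz for `n = 3`).

Unless a product splits off along the kernel of a diagonal block, an extreme ray can be brought by a
local congruence to the form `ρ = [1, c; cᴴ, b]`. If `c` is normal, a joint eigenvector of `c` and
`cᴴ` splits a product off `ρ`. Otherwise both Schur complements `b - cᴴ c` and `b - c cᴴ` are
nonzero, and counting dimensions at an extreme ray leaves only the case `n = 3` in which they have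
rank one, say `e eᴴ` and `d dᴴ`. Then `c cᴴ - cᴴ c = e eᴴ - d dᴴ`, and, after `e` is multiplied by a
suitable phase, some `f` makes the `4 × 4` matrix `[c, d; eᴴ, f]` normal; an eigenvector of this
normal matrix again splits a product off `ρ`.
-/

open Matrix

/-- The cone `M_q(ℂ)⁺ ⊗ M_p(ℂ)⁺` inside `M_p(M_q(ℂ))`: finite sums `∑ sₗ ⊗ xₗ` with
`sₗ ∈ M_q(ℂ)` and `xₗ ∈ M_p(ℂ)` positive semidefinite; `s ⊗ x` is the block matrix
`[x_{ij} s]`. -/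
def matPosCone (p q : ℕ) : Set (Matrix (Fin p) (Fin p) (Matrix (Fin q) (Fin q) ℂ)) :=
  { T | ∃ (k : ℕ) (s : Fin k → Matrix (Fin q) (Fin q) ℂ)
          (x : Fin k → Matrix (Fin p) (Fin p) ℂ),
      (∀ l, IsPosElem (s l)) ∧ (∀ l, IsPosElem (x l)) ∧
      T = ∑ l, Matrix.of fun i j => x l i j • s l }

open scoped ComplexOrder Topology

/-! ### Rank and positive semidefiniteness -/

lemma rank_eq_zero_iff_eq_zero {K m n : Type*} [Field K] [Fintype n] {M : Matrix m n K} :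
    M.rank = 0 ↔ M = 0 := by
  classical
  rw [rank, Submodule.finrank_eq_zero, LinearMap.range_eq_bot, ← toLin'_apply',
    LinearEquiv.map_eq_zero_iff]

section PosSemidef

variable {𝕜 m n : Type*} [RCLike 𝕜]

lemma isClosed_posSemidef [Finite n] : IsClosed {M : Matrix n n 𝕜 | M.PosSemidef} := by
  cases nonempty_fintype n
  have hset : {M : Matrix n n 𝕜 | M.PosSemidef} =
      {M | Mᴴ = M} ∩ ⋂ x : n → 𝕜, {M | 0 ≤ star x ⬝ᵥ M *ᵥ x} := by
    ext M
    simp [posSemidef_iff_dotProduct_mulVec, IsHermitian]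
  rw [hset]
  exact (isClosed_eq (by fun_prop) (by fun_prop)).inter
    (isClosed_iInter fun x ↦ isClosed_le continuous_const (by fun_prop))

open scoped MatrixOrder Matrix.Norms.L2Operator in
lemma eventually_posSemidef_one_add_smul [Finite n] [DecidableEq n] {X : Matrix n n ℂ}
    (hX : X.IsHermitian) : ∀ᶠ t : ℝ in 𝓝 0, (1 + t • X).PosSemidef := by
  cases nonempty_fintype n
  have hsmall : ∀ᶠ t : ℝ in 𝓝 0, ‖t • X‖ ≤ 1 := by
    have : Filter.Tendsto (fun t : ℝ ↦ ‖t • X‖) (𝓝 0) (𝓝 0) := by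
      have : Continuous fun t : ℝ ↦ ‖t • X‖ := by fun_prop
      simpa using this.tendsto 0
    exact this.eventually_le_const one_pos
  filter_upwards [hsmall] with t ht
  have hself : IsSelfAdjoint (t • X) := IsSelfAdjoint.smul (.all t) hX
  rw [← nonneg_iff_posSemidef]
  calc (0 : Matrix n n ℂ) ≤ 1 - algebraMap ℝ _ ‖t • X‖ := by
        rw [sub_nonneg, ← map_one (algebraMap ℝ (Matrix n n ℂ))]
        exact algebraMap_mono _ ht
    _ ≤ 1 + t • X := by
      rw [sub_eq_add_neg]
      gcongr
      exact hself.neg_algebraMap_norm_le_self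

variable [Fintype n]

lemma norm_apply_le_of_posSemidef {M : Matrix n n 𝕜} (hM : M.PosSemidef) (i j : n) :
    ‖M i j‖ ≤ RCLike.re M.trace := by
  set r : n → ℝ := fun i ↦ RCLike.re (M i i) with hr
  have hdiag (i) : M i i = (r i : 𝕜) := by
    obtain ⟨x, -, hx⟩ := RCLike.nonneg_iff_exists_ofReal.1 (hM.diag_nonneg (i := i))
    simp [hr, ← hx]
  have hr_nonneg (i) : 0 ≤ r i := (RCLike.nonneg_iff.1 hM.diag_nonneg).1
  have hr_le (i) : r i ≤ RCLike.re M.trace := by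
    rw [Matrix.trace, map_sum]
    exact Finset.single_le_sum (f := r) (fun i _ ↦ hr_nonneg i) (Finset.mem_univ i)
  have hminor : ‖M i j‖ ^ 2 ≤ r i * r j := by
    have hdet := (hM.submatrix ![i, j]).det_nonneg
    simp only [det_fin_two, submatrix_apply, cons_val_zero, cons_val_one] at hdet
    rw [hdiag, hdiag, ← hM.1.apply j i, RCLike.star_def, RCLike.mul_conj, sub_nonneg] at hdet
    exact_mod_cast hdet
  have htr := (hr_nonneg i).trans (hr_le i)
  refine (pow_le_pow_iff_left₀ (norm_nonneg _) htr two_ne_zero).1 (hminor.trans ?_)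
  rw [sq]
  exact mul_le_mul (hr_le i) (hr_le j) (hr_nonneg j) htr

lemma exists_smul_star_dotProduct_mulVec_eq_one {M : Matrix n n 𝕜} (hM : M.PosSemidef)
    {v : n → 𝕜} (hv : M *ᵥ v ≠ 0) : ∃ r : 𝕜, star (r • v) ⬝ᵥ M *ᵥ (r • v) = 1 := by
  set s := star v ⬝ᵥ M *ᵥ v with hs
  have hs_nonneg : 0 ≤ s := hM.dotProduct_mulVec_nonneg v
  have hs_ne : s ≠ 0 := fun h ↦ hv ((hM.dotProduct_mulVec_zero_iff v).1 h)
  have hs_eq : s = (RCLike.re s : 𝕜) := (RCLike.nonneg_iff_exists_ofReal.1 hs_nonneg).elim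
    fun x hx ↦ by simp [← hx.2]
  have hre : 0 < RCLike.re s := (RCLike.pos_iff.1 (hs_nonneg.lt_of_ne' hs_ne)).1
  refine ⟨((√(RCLike.re s))⁻¹ : ℝ), ?_⟩
  rw [star_smul, mulVec_smul, smul_dotProduct, dotProduct_smul, ← hs, hs_eq]
  simp only [RCLike.star_def, RCLike.conj_ofReal, smul_eq_mul, RCLike.ofReal_re]
  norm_cast
  rw [← mul_assoc, ← mul_inv, Real.mul_self_sqrt hre.le, inv_mul_cancel₀ hre.ne']

lemma exists_smul_star_dotProduct_self_eq_one {v : n → 𝕜} (hv : v ≠ 0) :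
    ∃ r : 𝕜, star (r • v) ⬝ᵥ (r • v) = 1 := by
  classical
  simpa using exists_smul_star_dotProduct_mulVec_eq_one (PosSemidef.one (n := n) (R := 𝕜))
    (v := v) (by simpa using hv)

lemma posSemidef_sub_vecMulVec {M : Matrix n n 𝕜} (hM : M.PosSemidef) {v : n → 𝕜}
    (hv : star v ⬝ᵥ M *ᵥ v = 1) :
    (M - vecMulVec (M *ᵥ v) (star (M *ᵥ v))).PosSemidef := by
  classical
  set w := M *ᵥ v
  have hw : star v ᵥ* M = star w := by rw [star_mulVec, hM.1.eq]
  have hwv : star w ⬝ᵥ v = 1 := by rw [← hw, ← dotProduct_mulVec, hv]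
  have hleft : (1 - vecMulVec w (star v)) * M = M - vecMulVec w (star w) := by
    rw [Matrix.sub_mul, Matrix.one_mul, vecMulVec_mul, hw]
  have hker : (M - vecMulVec w (star w)) *ᵥ v = 0 := by
    simp [sub_mulVec, vecMulVec_mulVec, hwv, w]
  have hcongr : (1 - vecMulVec w (star v)) * M * (1 - vecMulVec w (star v))ᴴ
      = M - vecMulVec w (star w) := by
    rw [hleft, conjTranspose_sub, conjTranspose_one, conjTranspose_vecMulVec, star_star,
      Matrix.mul_sub, Matrix.mul_one, mul_vecMulVec, hker, zero_vecMulVec, sub_zero]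
  exact hcongr ▸ hM.mul_mul_conjTranspose_same _

lemma exists_eq_mul_conjTranspose_of_rank_eq {E : Matrix n n 𝕜} (hE : E.PosSemidef) {k : ℕ}
    (hk : E.rank = k) :
    ∃ (F : Matrix n (Fin k) 𝕜) (L : Matrix (Fin k) n 𝕜), E = F * Fᴴ ∧ L * F = 1 := by
  classical
  set l := hE.1.eigenvalues with hl
  let f : Fin k ≃ {i // l i ≠ 0} :=
    (Fintype.equivFinOfCardEq (hE.1.rank_eq_card_non_zero_eigs.symm.trans hk)).symm
  let e : Fin k → n := fun a ↦ f a
  have he : Function.Injective e := Subtype.val_injective.comp f.injective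
  let U : Matrix n n 𝕜 := hE.1.eigenvectorUnitary.1
  let G : Matrix n (Fin k) 𝕜 := U.submatrix id e
  let d : Fin k → 𝕜 := fun a ↦ (√(l (e a)) : ℝ)
  have hd (a) : star (d a) = d a := RCLike.conj_ofReal _
  have hd_sq (a) : d a * d a = (l (e a) : 𝕜) := by
    rw [← RCLike.ofReal_mul, Real.mul_self_sqrt (hE.eigenvalues_nonneg _)]
  have hd_ne (a) : d a ≠ 0 := fun h ↦ (f a).2 (by simpa [h, e] using (hd_sq a).symm)
  have hGG : Gᴴ * G = 1 := by
    have hUU : Uᴴ * U = 1 := Unitary.coe_star_mul_self _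
    rw [conjTranspose_submatrix, ← submatrix_mul _ _ _ _ _ Function.bijective_id, hUU,
      submatrix_one _ he]
  have hEG : E = G * diagonal (fun a ↦ (l (e a) : 𝕜)) * Gᴴ := by
    conv_lhs => rw [hE.1.spectral_theorem, Unitary.conjStarAlgAut_apply]
    ext i j
    rw [mul_apply, mul_apply]
    refine (Fintype.sum_of_injective e he _ _ (fun x hx ↦ ?_) fun a ↦ ?_).symm
    · have hx : l x = 0 := by_contra fun h ↦ hx ⟨f.symm ⟨x, h⟩, by simp [e]⟩
      simp [hx, ← hl]
    · simp [G, U, ← hl]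
  refine ⟨G * diagonal d, diagonal (fun a ↦ (d a)⁻¹) * Gᴴ, ?_, ?_⟩
  · rw [conjTranspose_mul, diagonal_conjTranspose, Matrix.mul_assoc, ← Matrix.mul_assoc _ _ Gᴴ,
      diagonal_mul_diagonal, ← Matrix.mul_assoc]
    simpa [hd, hd_sq] using hEG
  · rw [Matrix.mul_assoc, ← Matrix.mul_assoc Gᴴ, hGG, Matrix.one_mul, diagonal_mul_diagonal]
    simp [hd_ne]

lemma exists_eq_vecMulVec_of_rank_eq_one {E : Matrix n n 𝕜} (hE : E.PosSemidef)
    (hrank : E.rank = 1) : ∃ e : n → 𝕜, E = vecMulVec e (star e) := by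
  obtain ⟨F, -, hF, -⟩ := exists_eq_mul_conjTranspose_of_rank_eq hE hrank
  refine ⟨fun i ↦ F i 0, hF.trans ?_⟩
  ext i j
  simp [mul_apply, vecMulVec_apply]

lemma card_add_rank_le_rank_fromBlocks [Fintype m] [DecidableEq m] {c : Matrix m n 𝕜}
    {b : Matrix n n 𝕜} (h : (b - cᴴ * c).PosSemidef) :
    Fintype.card m + (b - cᴴ * c).rank ≤ (fromBlocks 1 c cᴴ b).rank := by
  obtain ⟨k, hk⟩ : ∃ k, (b - cᴴ * c).rank = k := ⟨_, rfl⟩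
  obtain ⟨F, L, hF, hL⟩ := exists_eq_mul_conjTranspose_of_rank_eq h hk
  have hLL : L * (b - cᴴ * c) * Lᴴ = 1 := by
    rw [hF, ← Matrix.mul_assoc, hL, Matrix.one_mul, ← conjTranspose_mul, hL, conjTranspose_one]
  let P : Matrix (m ⊕ Fin k) (m ⊕ n) 𝕜 := fromBlocks 1 0 (-(L * cᴴ)) L
  have hone : P * fromBlocks 1 c cᴴ b * Pᴴ = 1 := by
    have hrow : -(L * cᴴ * c) + L * b = L * (b - cᴴ * c) := by
      rw [Matrix.mul_sub, Matrix.mul_assoc, neg_add_eq_sub]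
    simp [P, fromBlocks_conjTranspose, fromBlocks_multiply, hrow, hLL]
  calc Fintype.card m + (b - cᴴ * c).rank
      = (1 : Matrix (m ⊕ Fin k) (m ⊕ Fin k) 𝕜).rank := by simp [hk]
    _ ≤ (fromBlocks 1 c cᴴ b).rank := by
      rw [← hone]
      exact (rank_mul_le_left _ _).trans (rank_mul_le_right _ _)

end PosSemidef

/-! ### Normal matrices, phases and selfadjoint elements -/

section Star

lemma exists_mulVec_eq_smul {K n : Type*} [Field K] [IsAlgClosed K] [Fintype n] [Nonempty n]
    (N : Matrix n n K) : ∃ (z : K) (y : n → K), y ≠ 0 ∧ N *ᵥ y = z • y := by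
  classical
  obtain ⟨z, hz⟩ := Module.End.exists_eigenvalue (toLin' N)
  obtain ⟨y, hy⟩ := hz.exists_hasEigenvector
  exact ⟨z, y, hy.2, by simpa using hy.apply_eq_smul⟩

lemma conjTranspose_mulVec_eq_star_smul {𝕜 n : Type*} [RCLike 𝕜] [Fintype n] {N : Matrix n n 𝕜}
    (hN : IsStarNormal N) {z : 𝕜} {y : n → 𝕜} (hy : N *ᵥ y = z • y) :
    Nᴴ *ᵥ y = star z • y := by
  classical
  have hcomm : Nᴴ * N = N * Nᴴ := hN.star_comm_self
  have hker : (N - z • 1) *ᵥ y = 0 := by simp [sub_mulVec, smul_mulVec, hy]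
  have hnormal : (N - z • 1) * (N - z • 1)ᴴ = (N - z • 1)ᴴ * (N - z • 1) := by
    simp only [conjTranspose_sub, conjTranspose_smul, conjTranspose_one, Matrix.sub_mul,
      Matrix.mul_sub, hcomm, Matrix.smul_mul, Matrix.mul_smul, Matrix.one_mul, Matrix.mul_one,
      smul_sub, smul_smul, mul_comm]
    abel
  have hker' : (N - z • 1)ᴴ *ᵥ y = 0 := by
    rw [← self_mul_conjTranspose_mulVec_eq_zero, hnormal, ← mulVec_mulVec, hker, mulVec_zero]
  simpa [sub_mulVec, smul_mulVec, sub_eq_zero] using hker'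

lemma exists_smul_eq_of_vecMulVec_star_self_eq {K n : Type*} [Field K] [StarRing K] {x z : n → K}
    (h : vecMulVec x (star x) = vecMulVec z (star z)) :
    ∃ ω : K, ω * star ω = 1 ∧ x = ω • z := by
  have hentry (i j) : x i * star (x j) = z i * star (z j) := congrFun (congrFun h i) j
  obtain rfl | hx := eq_or_ne x 0
  · have hz : z = 0 := by simpa using h.symm
    exact ⟨1, by simp, by simp [hz]⟩
  obtain ⟨i, hi⟩ := Function.ne_iff.1 hx
  have hi' : star (x i) ≠ 0 := star_ne_zero.2 hi
  refine ⟨star (z i) / star (x i), ?_, ?_⟩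
  · rw [star_div₀, star_star, star_star, div_mul_div_comm, mul_comm, ← hentry, mul_comm,
      div_self (mul_ne_zero hi' hi)]
  · ext j
    rw [Pi.smul_apply, smul_eq_mul, div_mul_eq_mul_div, eq_div_iff hi', hentry, mul_comm]

lemma exists_isSelfAdjoint_ne_zero_of_star_mem {E : Type*} [AddCommGroup E] [Module ℂ E]
    [StarAddMonoid E] [StarModule ℂ E] {W : Submodule ℂ E} (hW : ∀ x ∈ W, star x ∈ W)
    (hne : W ≠ ⊥) : ∃ x ∈ W, IsSelfAdjoint x ∧ x ≠ 0 := by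
  obtain ⟨x, hx, hx0⟩ := Submodule.exists_mem_ne_zero_of_ne_bot hne
  by_cases h : x + star x = 0
  · refine ⟨Complex.I • x, W.smul_mem _ hx, ?_, smul_ne_zero Complex.I_ne_zero hx0⟩
    simp [isSelfAdjoint_iff, eq_neg_of_add_eq_zero_right h]
  · exact ⟨x + star x, W.add_mem hx (hW x hx), .add_star_self x, h⟩

lemma exists_unitary_conj_eq_diagonal_of_det_eq_zero {𝕜 n : Type*} [RCLike 𝕜] [Fintype n]
    [DecidableEq n] {K : Matrix n n 𝕜} (hK : K.IsHermitian) (hdet : K.det = 0) (i : n) :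
    ∃ V ∈ unitaryGroup n 𝕜, ∃ μ : n → 𝕜, Vᴴ * K * V = diagonal μ ∧ μ i = 0 := by
  obtain ⟨j, -, hj⟩ := Finset.prod_eq_zero_iff.1 (hK.det_eq_prod_eigenvalues.symm.trans hdet)
  let σ := Equiv.swap i j
  let U : Matrix n n 𝕜 := hK.eigenvectorUnitary
  have hU : Uᴴ * K * U = diagonal (RCLike.ofReal ∘ hK.eigenvalues) :=
    (Unitary.conjStarAlgAut_star_apply ..).symm.trans
      hK.conjStarAlgAut_star_eigenvectorUnitary
  have hUU : U * Uᴴ = 1 := mem_unitaryGroup_iff.1 hK.eigenvectorUnitary.2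
  refine ⟨U.submatrix id σ, mem_unitaryGroup_iff.2 ?_,
    (RCLike.ofReal ∘ hK.eigenvalues) ∘ σ, ?_, by simpa [σ] using hj⟩
  · rw [star_eq_conjTranspose, conjTranspose_submatrix, submatrix_mul_equiv, hUU, submatrix_id_id]
  · calc (U.submatrix id σ)ᴴ * K * U.submatrix id σ = (Uᴴ * K * U).submatrix σ σ := rfl
      _ = diagonal ((RCLike.ofReal ∘ hK.eigenvalues) ∘ σ) := by rw [hU, submatrix_diagonal_equiv]

end Star

/-! ### Extreme rays of convex cones -/

/-- `x` spans an extreme ray of the cone `C`, i.e. the multiples of `x` form a face of `C`. The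
zero vector is allowed. -/
def IsExtremeRay {E : Type*} [AddCommGroup E] [Module ℝ E] (C : PointedCone ℝ E) (x : E) : Prop :=
  x ∈ C ∧ ∀ y ∈ C, x - y ∈ C → ∃ t : ℝ, 0 ≤ t ∧ y = t • x

section Cone

variable {E E' : Type*} [AddCommGroup E] [Module ℝ E] [AddCommGroup E'] [Module ℝ E']
  {C : PointedCone ℝ E} {C' : PointedCone ℝ E'} {x : E}

namespace IsExtremeRay

lemma mem_of_sub_mem {D : PointedCone ℝ E} (hx : IsExtremeRay C x) {y : E} (hyC : y ∈ C)
    (hxy : x - y ∈ C) (hy : y ≠ 0) (hyD : y ∈ D) : x ∈ D := by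
  obtain ⟨t, ht, rfl⟩ := hx.2 y hyC hxy
  have ht' : t ≠ 0 := fun h ↦ hy (by simp [h])
  simpa [smul_smul, inv_mul_cancel₀ ht'] using D.smul_mem (inv_nonneg.2 ht) hyD

lemma map_of_leftInverse (hx : IsExtremeRay C x) (f : E →ₗ[ℝ] E') (g : E' →ₗ[ℝ] E)
    (hf : ∀ y ∈ C, f y ∈ C') (hg : ∀ y ∈ C', g y ∈ C) (hfg : ∀ y, f (g y) = y)
    (hgf : g (f x) = x) : IsExtremeRay C' (f x) := by
  refine ⟨hf x hx.1, fun y hy hxy ↦ ?_⟩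
  obtain ⟨t, ht, hty⟩ := hx.2 (g y) (hg y hy) (by simpa [hgf] using hg _ hxy)
  exact ⟨t, ht, by rw [← hfg y, hty, map_smul]⟩

lemma eq_zero_of_add_mem_of_sub_mem (hx : IsExtremeRay C x) {φ : E →ₗ[ℝ] ℝ} (hφx : φ x ≠ 0)
    {h : E} (hφh : φ h = 0) (hadd : x + h ∈ C) (hsub : x - h ∈ C) : h = 0 := by
  obtain ⟨t, -, ht⟩ := hx.2 ((1 / 2 : ℝ) • (x + h)) (C.smul_mem (by norm_num) hadd) (by
    have : x - (1 / 2 : ℝ) • (x + h) = (1 / 2 : ℝ) • (x - h) := by module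
    exact this ▸ C.smul_mem (by norm_num) hsub)
  have hh : h = (2 * t - 1) • x := by
    have : h = (2 : ℝ) • ((1 / 2 : ℝ) • (x + h)) - x := by module
    rw [this, ht]
    module
  have ht0 : 2 * t - 1 = 0 := by simpa [hh, hφx] using hφh
  rw [hh, ht0, zero_smul]

end IsExtremeRay

variable {φ : E →ₗ[ℝ] ℝ}

lemma isExtremeRay_of_mem_extremePoints (hφ : ∀ y ∈ C, y ≠ 0 → 0 < φ y)
    (hx : x ∈ {y | y ∈ C ∧ φ y = 1}.extremePoints ℝ) : IsExtremeRay C x := by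
  obtain ⟨⟨hxC, hφx⟩, hext⟩ := hx
  refine ⟨hxC, fun y hy hxy ↦ ?_⟩
  obtain rfl | hy0 := eq_or_ne y 0
  · exact ⟨0, le_rfl, by simp⟩
  obtain hxy0 | hxy0 := eq_or_ne (x - y) 0
  · exact ⟨1, zero_le_one, by simp [sub_eq_zero.1 hxy0]⟩
  have hs : 0 < φ y := hφ y hy hy0
  have hs' : 0 < 1 - φ y := by simpa [hφx] using hφ _ hxy hxy0
  have hyx : (φ y)⁻¹ • y = x := by
    refine hext ⟨C.smul_mem (inv_nonneg.2 hs.le) hy, by simp [hs.ne']⟩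
      ⟨C.smul_mem (inv_nonneg.2 hs'.le) hxy, by simp [hφx, hs'.ne']⟩
      ⟨φ y, 1 - φ y, hs, hs', by ring, ?_⟩
    rw [smul_inv_smul₀ hs.ne', smul_inv_smul₀ hs'.ne', add_sub_cancel]
  exact ⟨φ y, hs.le, by rw [← hyx, smul_smul, mul_inv_cancel₀ hs.ne', one_smul]⟩

lemma le_closure_of_isExtremeRay_mem [TopologicalSpace E] [T2Space E] [IsTopologicalAddGroup E]
    [ContinuousSMul ℝ E] [LocallyConvexSpace ℝ E] {D : PointedCone ℝ E}
    (hφ : ∀ y ∈ C, y ≠ 0 → 0 < φ y) (hC : IsCompact {y | y ∈ C ∧ φ y = 1})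
    (hD : ∀ y, IsExtremeRay C y → y ∈ D) : C ≤ D.closure := by
  intro x hx
  obtain rfl | hx0 := eq_or_ne x 0
  · exact zero_mem _
  have hφx := hφ x hx hx0
  have hconvex : Convex ℝ {y | y ∈ C ∧ φ y = 1} :=
    C.convex.inter (convex_hyperplane φ.isLinear 1)
  have hbase : (φ x)⁻¹ • x ∈ D.closure := by
    have hmem : (φ x)⁻¹ • x ∈ {y | y ∈ C ∧ φ y = 1} :=
      ⟨C.smul_mem (inv_nonneg.2 hφx.le) hx, by simp [hφx.ne']⟩
    rw [← closure_convexHull_extremePoints hC hconvex] at hmem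
    exact closure_mono (convexHull_min
      (fun y hy ↦ hD y (isExtremeRay_of_mem_extremePoints hφ hy)) D.convex) hmem
  simpa [smul_smul, hφx.ne'] using D.closure.smul_mem hφx.le hbase

end Cone

/-! ### Cones of matrices that are positive together with their image -/

section Bipositive

variable {k l m n : Type*}

/-- The congruence `M ↦ A M Aᴴ` as a linear map. -/
def congruence [Fintype n] (A : Matrix m n ℂ) : Matrix n n ℂ →ₗ[ℂ] Matrix m m ℂ where
  toFun M := A * M * Aᴴ
  map_add' M N := by rw [Matrix.mul_add, Matrix.add_mul]
  map_smul' t M := by simp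

/-- The real part of the trace, as an `ℝ`-linear functional: the scale that cuts a compact base out
of cones of positive semidefinite matrices. -/
noncomputable def reTrace [Fintype n] : Matrix n n ℂ →ₗ[ℝ] ℝ := Complex.reLm ∘ₗ traceLinearMap n ℝ ℂ

/-- The cone of positive semidefinite matrices whose image under `T` is positive semidefinite. -/
def bipositiveCone (T : Matrix m m ℂ →ₗ[ℂ] Matrix n n ℂ) : PointedCone ℝ (Matrix m m ℂ) where
  carrier := {ρ | ρ.PosSemidef ∧ (T ρ).PosSemidef}
  add_mem' hρ hσ := ⟨hρ.1.add hσ.1, by rw [map_add]; exact hρ.2.add hσ.2⟩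
  zero_mem' := ⟨.zero, by rw [map_zero]; exact .zero⟩
  smul_mem' t ρ hρ := ⟨hρ.1.smul t.2, by rw [T.map_smul_of_tower]; exact hρ.2.smul t.2⟩

lemma reTrace_pos [Fintype n] {ρ : Matrix n n ℂ} (hρ : ρ.PosSemidef) (hne : ρ ≠ 0) :
    0 < reTrace ρ :=
  (Complex.pos_iff.1 (hρ.trace_nonneg.lt_of_ne' (mt hρ.trace_eq_zero_iff.1 hne))).1

variable {T : Matrix m m ℂ →ₗ[ℂ] Matrix n n ℂ} {ρ : Matrix m m ℂ}

lemma isCompact_bipositiveCone_inter_reTrace_eq_one [Fintype m] [Finite n] :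
    IsCompact {ρ | ρ ∈ bipositiveCone T ∧ reTrace ρ = 1} := by
  have hbox : IsCompact (Set.univ.pi fun _ : m ↦ Set.univ.pi fun _ : m ↦
      Metric.closedBall (0 : ℂ) 1) :=
    isCompact_univ_pi fun _ ↦ isCompact_univ_pi fun _ ↦ isCompact_closedBall _ _
  have hclosed : IsClosed {ρ | ρ ∈ bipositiveCone T ∧ reTrace ρ = 1} :=
    (isClosed_posSemidef.inter
      (isClosed_posSemidef.preimage T.continuous_of_finiteDimensional)).inter
      (isClosed_eq reTrace.continuous_of_finiteDimensional continuous_const)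
  refine hbox.of_isClosed_subset hclosed fun ρ ⟨hρ, htr⟩ i _ j _ ↦ ?_
  simpa using (norm_apply_le_of_posSemidef hρ.1 i j).trans_eq htr

lemma bipositiveCone_le_closure_of_isExtremeRay_mem [Finite m] [Finite n]
    {D : PointedCone ℝ (Matrix m m ℂ)} (hD : ∀ ρ, IsExtremeRay (bipositiveCone T) ρ → ρ ∈ D) :
    bipositiveCone T ≤ D.closure := by
  cases nonempty_fintype m
  have : LocallyConvexSpace ℝ (Matrix m m ℂ) := inferInstanceAs (LocallyConvexSpace ℝ (m → m → ℂ))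
  exact le_closure_of_isExtremeRay_mem (fun _ hρ ↦ reTrace_pos hρ.1)
    isCompact_bipositiveCone_inter_reTrace_eq_one hD

variable [Fintype k] [Fintype l]

lemma conjTranspose_congruence (F : Matrix m k ℂ) (X : Matrix k k ℂ) :
    (congruence F X)ᴴ = congruence F Xᴴ := by
  simp [congruence, Matrix.mul_assoc]

lemma eq_zero_of_congruence_eq_zero [Fintype m] [DecidableEq k] {F : Matrix m k ℂ}
    {L : Matrix k m ℂ} (hL : L * F = 1) {X : Matrix k k ℂ} (hX : congruence F X = 0) : X = 0 := by
  calc X = L * F * X * (L * F)ᴴ := by simp [hL]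
    _ = L * (F * X * Fᴴ) * Lᴴ := by simp only [conjTranspose_mul, Matrix.mul_assoc]
    _ = 0 := by rw [show F * X * Fᴴ = 0 from hX, Matrix.mul_zero, Matrix.zero_mul]

/-- A Hermitian solution `(X, Y)` gives a two-sided perturbation of `ρ` inside its cone. -/
lemma IsExtremeRay.congruence_eq_zero [Fintype m] [Finite n]
    (hρ : IsExtremeRay (bipositiveCone T) ρ) (hne : ρ ≠ 0)
    {F : Matrix m k ℂ} {G : Matrix n l ℂ} (hF : ρ = F * Fᴴ) (hG : T ρ = G * Gᴴ)
    {X : Matrix k k ℂ} {Y : Matrix l l ℂ} (hX : X.IsHermitian) (hY : Y.IsHermitian)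
    (hXY : T (congruence F X) = congruence G Y) (htr : (congruence F X).trace = 0) :
    congruence F X = 0 := by
  classical
  have hmem : ∀ᶠ t : ℝ in 𝓝 0, ρ + t • congruence F X ∈ bipositiveCone T := by
    filter_upwards [eventually_posSemidef_one_add_smul hX,
      eventually_posSemidef_one_add_smul hY] with t htX htY
    have hFt : ρ + t • congruence F X = congruence F (1 + t • X) := by
      simp [congruence, hF, Matrix.mul_add, Matrix.add_mul]
    have hGt : T (ρ + t • congruence F X) = congruence G (1 + t • Y) := by
      rw [map_add, T.map_smul_of_tower, hXY, hG]
      simp [congruence, Matrix.mul_add, Matrix.add_mul]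
    refine ⟨hFt ▸ htX.mul_mul_conjTranspose_same F, ?_⟩
    rw [hGt]
    exact htY.mul_mul_conjTranspose_same G
  have hmem' : ∀ᶠ t : ℝ in 𝓝 0, ρ + (-t) • congruence F X ∈ bipositiveCone T := by
    have hneg : Filter.Tendsto (fun t : ℝ ↦ -t) (𝓝 0) (𝓝 0) := by
      simpa using (continuous_neg (G := ℝ)).tendsto 0
    exact hneg.eventually hmem
  obtain ⟨t, ⟨hadd, hsub⟩, ht⟩ := (((hmem.and hmem').filter_mono nhdsWithin_le_nhds).and
    (eventually_mem_nhdsWithin (a := (0 : ℝ)) (s := {0}ᶜ))).exists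
  rw [neg_smul, ← sub_eq_add_neg] at hsub
  refine (smul_eq_zero.1 (hρ.eq_zero_of_add_mem_of_sub_mem (reTrace_pos hρ.1.1 hne).ne' ?_ hadd
    hsub)).resolve_left ht
  simp [reTrace, htr]

lemma IsExtremeRay.rank_sq_add_rank_sq_le [Fintype m] [Fintype n] (hT : ∀ M, T Mᴴ = (T M)ᴴ)
    (hρ : IsExtremeRay (bipositiveCone T) ρ) (hne : ρ ≠ 0) :
    ρ.rank ^ 2 + (T ρ).rank ^ 2 ≤ Fintype.card n ^ 2 + 1 := by
  obtain ⟨F, L, hF, hLF⟩ := exists_eq_mul_conjTranspose_of_rank_eq hρ.1.1 rfl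
  obtain ⟨G, L', hG, hLG⟩ := exists_eq_mul_conjTranspose_of_rank_eq hρ.1.2 rfl
  let Φ := (T ∘ₗ congruence F ∘ₗ .fst ℂ _ _ - congruence G ∘ₗ .snd ℂ _ _).prod
    (traceLinearMap m ℂ ℂ ∘ₗ congruence F ∘ₗ .fst ℂ _ _)
  have hΦ (p) : p ∈ LinearMap.ker Φ ↔
      T (congruence F p.1) = congruence G p.2 ∧ (congruence F p.1).trace = 0 := by
    simp [Φ, sub_eq_zero]
  by_contra! hlt
  have hker : LinearMap.ker Φ ≠ ⊥ := by
    apply LinearMap.ker_ne_bot_of_finrank_lt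
    simpa [Module.finrank_prod, Module.finrank_matrix, ← sq] using hlt
  obtain ⟨⟨X, Y⟩, hmem, hself, hXY⟩ :=
    exists_isSelfAdjoint_ne_zero_of_star_mem (W := LinearMap.ker Φ) (fun p hp ↦ by
      obtain ⟨hTp, htr⟩ := (hΦ p).1 hp
      simp only [hΦ, Prod.fst_star, Prod.snd_star, star_eq_conjTranspose,
        ← conjTranspose_congruence, hT, hTp, trace_conjTranspose, htr, star_zero, and_self]) hker
  obtain ⟨hTX, htr⟩ := (hΦ _).1 hmem
  have hX0 : congruence F X = 0 :=
    hρ.congruence_eq_zero hne hF hG (congrArg Prod.fst hself) (congrArg Prod.snd hself) hTX htr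
  have hY0 : congruence G Y = 0 := by rw [← hTX, hX0, map_zero]
  exact hXY (Prod.ext (eq_zero_of_congruence_eq_zero hLF hX0)
    (eq_zero_of_congruence_eq_zero hLG hY0))

end Bipositive

/-! ### Matrices over `ℂ² ⊗ ℂⁿ` -/

section Qubit

variable {l m n : Type*}

/-- The partial transpose of a matrix over `ℂ² ⊗ ℂⁿ`. Such a matrix is encoded as a `2 × 2` matrix
of `n × n` blocks, so that the partial transpose exchanges the off-diagonal blocks. -/
def partialTranspose : Matrix (n ⊕ n) (n ⊕ n) ℂ →ₗ[ℂ] Matrix (n ⊕ n) (n ⊕ n) ℂ where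
  toFun M := fromBlocks M.toBlocks₁₁ M.toBlocks₂₁ M.toBlocks₁₂ M.toBlocks₂₂
  map_add' M N := by ext (i | i) (j | j) <;> rfl
  map_smul' t M := by ext (i | i) (j | j) <;> rfl

lemma partialTranspose_fromBlocks (a b c d : Matrix n n ℂ) :
    partialTranspose (fromBlocks a b c d) = fromBlocks a c b d := by
  simp [partialTranspose]

lemma conjTranspose_partialTranspose (M : Matrix (n ⊕ n) (n ⊕ n) ℂ) :
    partialTranspose Mᴴ = (partialTranspose M)ᴴ := by
  ext (i | i) (j | j) <;> rfl

/-- The cone of PPT matrices: those that are positive together with their partial transpose. -/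
abbrev pptCone (n : Type*) : PointedCone ℝ (Matrix (n ⊕ n) (n ⊕ n) ℂ) :=
  bipositiveCone partialTranspose

/-- The matrix `x xᴴ ⊗ y yᴴ` with `x = (x₀, x₁)`. -/
def prodMatrix (x₀ x₁ : ℂ) (y : n → ℂ) : Matrix (n ⊕ n) (n ⊕ n) ℂ :=
  vecMulVec (Sum.elim (x₀ • y) (x₁ • y)) (star (Sum.elim (x₀ • y) (x₁ • y)))

/-- The cone of separable matrices: the finite sums of products `x xᴴ ⊗ y yᴴ`. -/
noncomputable def separableCone (n : Type*) : PointedCone ℝ (Matrix (n ⊕ n) (n ⊕ n) ℂ) :=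
  PointedCone.hull ℝ {M | ∃ x₀ x₁ y, M = prodMatrix x₀ x₁ y}

lemma prodMatrix_eq_fromBlocks (x₀ x₁ : ℂ) (y : n → ℂ) :
    prodMatrix x₀ x₁ y = fromBlocks ((x₀ * star x₀) • vecMulVec y (star y))
      ((x₀ * star x₁) • vecMulVec y (star y)) ((x₁ * star x₀) • vecMulVec y (star y))
      ((x₁ * star x₁) • vecMulVec y (star y)) := by
  ext (i | i) (j | j) <;> simp [prodMatrix, vecMulVec_apply, mul_mul_mul_comm]

lemma prodMatrix_ne_zero {x₀ x₁ : ℂ} {y : n → ℂ} (hx : x₀ ≠ 0 ∨ x₁ ≠ 0) (hy : y ≠ 0) :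
    prodMatrix x₀ x₁ y ≠ 0 := by
  obtain ⟨i, hi⟩ := Function.ne_iff.1 hy
  rw [prodMatrix, Ne, vecMulVec_eq_zero, star_eq_zero, or_self]
  intro h
  obtain h₀ | h₁ := hx
  · exact hi (by simpa [h₀] using congrFun h (.inl i))
  · exact hi (by simpa [h₁] using congrFun h (.inr i))

lemma partialTranspose_prodMatrix (x₀ x₁ : ℂ) (y : n → ℂ) :
    partialTranspose (prodMatrix x₀ x₁ y) = prodMatrix (star x₀) (star x₁) y := by
  simp only [prodMatrix_eq_fromBlocks, partialTranspose_fromBlocks, star_star, mul_comm]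

lemma prodMatrix_mem_separableCone (x₀ x₁ : ℂ) (y : n → ℂ) :
    prodMatrix x₀ x₁ y ∈ separableCone n :=
  Submodule.subset_span ⟨x₀, x₁, y, rfl⟩

lemma posSemidef_prodMatrix [Finite n] (x₀ x₁ : ℂ) (y : n → ℂ) :
    (prodMatrix x₀ x₁ y).PosSemidef :=
  posSemidef_vecMulVec_self_star _

lemma prodMatrix_mem_pptCone [Finite n] (x₀ x₁ : ℂ) (y : n → ℂ) :
    prodMatrix x₀ x₁ y ∈ pptCone n :=
  ⟨posSemidef_prodMatrix .., partialTranspose_prodMatrix x₀ x₁ y ▸ posSemidef_prodMatrix ..⟩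

variable [Fintype n]

/-- The congruence `M ↦ (1 ⊗ A) M (1 ⊗ A)ᴴ` by a local operator. -/
def localCongruence (A : Matrix m n ℂ) :
    Matrix (n ⊕ n) (n ⊕ n) ℂ →ₗ[ℂ] Matrix (m ⊕ m) (m ⊕ m) ℂ :=
  congruence (fromBlocks A 0 0 A)

lemma localCongruence_fromBlocks (A : Matrix m n ℂ) (a b c d : Matrix n n ℂ) :
    localCongruence A (fromBlocks a b c d) =
      fromBlocks (A * a * Aᴴ) (A * b * Aᴴ) (A * c * Aᴴ) (A * d * Aᴴ) := by
  simp [localCongruence, congruence, fromBlocks_multiply, fromBlocks_conjTranspose]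

lemma localCongruence_localCongruence [Fintype m] (A : Matrix l m ℂ) (B : Matrix m n ℂ)
    (M : Matrix (n ⊕ n) (n ⊕ n) ℂ) :
    localCongruence A (localCongruence B M) = localCongruence (A * B) M := by
  rw [← fromBlocks_toBlocks M]
  simp only [localCongruence_fromBlocks, conjTranspose_mul, Matrix.mul_assoc]

lemma localCongruence_one [DecidableEq n] (M : Matrix (n ⊕ n) (n ⊕ n) ℂ) :
    localCongruence 1 M = M := by
  simp [localCongruence, congruence]

lemma partialTranspose_localCongruence (A : Matrix m n ℂ) (M : Matrix (n ⊕ n) (n ⊕ n) ℂ) :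
    partialTranspose (localCongruence A M) = localCongruence A (partialTranspose M) := by
  rw [← fromBlocks_toBlocks M]
  simp only [localCongruence_fromBlocks, partialTranspose_fromBlocks]

lemma localCongruence_mem_pptCone [Finite m] (A : Matrix m n ℂ) {M : Matrix (n ⊕ n) (n ⊕ n) ℂ}
    (hM : M ∈ pptCone n) : localCongruence A M ∈ pptCone m := by
  refine ⟨hM.1.mul_mul_conjTranspose_same _, ?_⟩
  rw [partialTranspose_localCongruence]
  exact hM.2.mul_mul_conjTranspose_same _

lemma localCongruence_prodMatrix (A : Matrix m n ℂ) (x₀ x₁ : ℂ) (y : n → ℂ) :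
    localCongruence A (prodMatrix x₀ x₁ y) = prodMatrix x₀ x₁ (A *ᵥ y) := by
  simp only [prodMatrix_eq_fromBlocks, localCongruence_fromBlocks, Matrix.mul_smul,
    Matrix.smul_mul, mul_vecMulVec, vecMulVec_mul, star_mulVec]

lemma localCongruence_mem_separableCone (A : Matrix m n ℂ) {M : Matrix (n ⊕ n) (n ⊕ n) ℂ}
    (hM : M ∈ separableCone n) : localCongruence A M ∈ separableCone m := by
  have hle : separableCone n ≤
      (separableCone m).comap ((localCongruence A).restrictScalars ℝ) := by
    refine Submodule.span_le.2 ?_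
    rintro _ ⟨x₀, x₁, y, rfl⟩
    change localCongruence A (prodMatrix x₀ x₁ y) ∈ separableCone m
    rw [localCongruence_prodMatrix]
    exact prodMatrix_mem_separableCone x₀ x₁ (A *ᵥ y)
  exact hle hM

end Qubit

/-! ### Splitting off product vectors -/

section Split

variable {k m n : Type*} [Fintype n] [DecidableEq n]

/-- The Gram matrix `Wᴴ W` of the block row `W = [1 N]`. If `N` is normal, this matrix is PPT and
each eigenvector of `N` splits a product off it. -/
def gramBlocks (N : Matrix n n ℂ) : Matrix (n ⊕ n) (n ⊕ n) ℂ :=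
  fromBlocks 1 N Nᴴ (Nᴴ * N)

variable {N : Matrix n n ℂ}

lemma posSemidef_gramBlocks (N : Matrix n n ℂ) : (gramBlocks N).PosSemidef := by
  have h : gramBlocks N = (fromCols 1 N)ᴴ * fromCols 1 N := by
    rw [conjTranspose_fromCols_eq_fromRows_conjTranspose, fromRows_mul_fromCols]
    simp [gramBlocks]
  exact h ▸ posSemidef_conjTranspose_mul_self _

lemma gramBlocks_mem_pptCone (hN : IsStarNormal N) : gramBlocks N ∈ pptCone n := by
  have h : partialTranspose (gramBlocks N) = gramBlocks Nᴴ := by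
    rw [gramBlocks, gramBlocks, partialTranspose_fromBlocks, conjTranspose_conjTranspose,
      ← star_eq_conjTranspose, star_comm_self]
  exact ⟨posSemidef_gramBlocks N, h ▸ posSemidef_gramBlocks Nᴴ⟩

lemma gramBlocks_sub_prodMatrix (hN : IsStarNormal N) {y : n → ℂ} {z : ℂ} (hy : N *ᵥ y = z • y)
    (hy₁ : star y ⬝ᵥ y = 1) :
    gramBlocks N - prodMatrix 1 (star z) y =
      localCongruence (1 - vecMulVec y (star y)) (gramBlocks N) := by
  set Y := vecMulVec y (star y) with hY
  have hYY : Y * Y = Y := by rw [hY, vecMulVec_mul_vecMulVec, hy₁, one_smul]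
  have hY' : Yᴴ = Y := by rw [hY, conjTranspose_vecMulVec, star_star]
  have hy' : Nᴴ *ᵥ y = star z • y := conjTranspose_mulVec_eq_star_smul hN hy
  have hNY : N * Y = z • Y := by rw [hY, mul_vecMulVec, hy, smul_vecMulVec]
  have hNY' : Nᴴ * Y = star z • Y := by rw [hY, mul_vecMulVec, hy', smul_vecMulVec]
  have hYN : Y * N = z • Y := by simpa [hY'] using congrArg conjTranspose hNY'
  have hYN' : Y * Nᴴ = star z • Y := by simpa [hY'] using congrArg conjTranspose hNY
  have compress {M : Matrix n n ℂ} {w : ℂ} (hM : M * Y = w • Y) (hM' : Y * M = w • Y) :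
      (1 - Y) * M * (1 - Y)ᴴ = M - w • Y := by
    rw [conjTranspose_sub, conjTranspose_one, hY', Matrix.mul_sub, Matrix.sub_mul, Matrix.one_mul,
      Matrix.mul_one, hM', Matrix.sub_mul, hM, Matrix.smul_mul, hYY, sub_self, sub_zero]
  rw [gramBlocks, localCongruence_fromBlocks, compress hNY hYN, compress hNY' hYN',
    compress (w := 1) (by simp) (by simp),
    compress (w := z * star z) (by rw [Matrix.mul_assoc, hNY, Matrix.mul_smul, hNY', smul_smul])
      (by rw [← Matrix.mul_assoc, hYN', Matrix.smul_mul, hYN, smul_smul, mul_comm]),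
    prodMatrix_eq_fromBlocks, sub_eq_add_neg, fromBlocks_neg, fromBlocks_add]
  simp [hY, sub_eq_add_neg, mul_comm]

/-- The product that splits off comes from the joint eigenvector `y` of `N` and `Nᴴ`. -/
lemma IsExtremeRay.mem_separableCone_of_sub_localCongruence_gramBlocks [Finite m]
    {ρ : Matrix (m ⊕ m) (m ⊕ m) ℂ} (hρ : IsExtremeRay (pptCone m) ρ) (hN : IsStarNormal N)
    {V : Matrix m n ℂ} {y : n → ℂ} {z : ℂ} (hy : N *ᵥ y = z • y) (hVy : V *ᵥ y ≠ 0)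
    (hsub : ρ - localCongruence V (gramBlocks N) ∈ pptCone m) : ρ ∈ separableCone m := by
  obtain ⟨r, hr⟩ := exists_smul_star_dotProduct_self_eq_one (v := y) (by rintro rfl; simp at hVy)
  have hr0 : r ≠ 0 := by rintro rfl; simp at hr
  have hry : N *ᵥ (r • y) = z • r • y := by rw [mulVec_smul, hy, smul_comm]
  refine hρ.mem_of_sub_mem (prodMatrix_mem_pptCone 1 (star z) (V *ᵥ (r • y))) ?_ ?_
    (prodMatrix_mem_separableCone _ _ _)
  · have h := add_mem hsub (localCongruence_mem_pptCone V
      (localCongruence_mem_pptCone (1 - vecMulVec (r • y) (star (r • y)))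
        (gramBlocks_mem_pptCone hN)))
    rwa [← gramBlocks_sub_prodMatrix hN hry hr, map_sub, localCongruence_prodMatrix,
      sub_add_sub_cancel] at h
  · exact prodMatrix_ne_zero (.inl one_ne_zero) (by simp [mulVec_smul, hr0, hVy])

end Split

section Kernel

variable {n : Type*} [Fintype n] {a b c : Matrix n n ℂ} {v : n → ℂ}

lemma conjTranspose_mulVec_eq_zero_of_posSemidef_fromBlocks
    (h : (fromBlocks a c cᴴ b).PosSemidef) (hv : a *ᵥ v = 0) : cᴴ *ᵥ v = 0 := by
  have h₀ := (h.dotProduct_mulVec_zero_iff (Sum.elim v 0)).1 (by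
    simp [fromBlocks_mulVec, hv, dotProduct, Fintype.sum_sum_type])
  ext i
  simpa [fromBlocks_mulVec] using congrFun h₀ (.inr i)

lemma mulVec_eq_zero_of_fromBlocks_mem_pptCone (h : fromBlocks a c cᴴ b ∈ pptCone n)
    (hv : a *ᵥ v = 0) : c *ᵥ v = 0 ∧ cᴴ *ᵥ v = 0 := by
  refine ⟨?_, conjTranspose_mulVec_eq_zero_of_posSemidef_fromBlocks h.1 hv⟩
  have h' := h.2
  rw [partialTranspose_fromBlocks] at h'
  simpa using conjTranspose_mulVec_eq_zero_of_posSemidef_fromBlocks (c := cᴴ) (by simpa using h') hv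

lemma IsExtremeRay.mem_separableCone_of_mulVec_ne_zero
    (h : IsExtremeRay (pptCone n) (fromBlocks a c cᴴ b)) (hav : a *ᵥ v = 0) (hbv : b *ᵥ v ≠ 0) :
    fromBlocks a c cᴴ b ∈ separableCone n := by
  obtain ⟨hcv, hcv'⟩ := mulVec_eq_zero_of_fromBlocks_mem_pptCone h.1 hav
  have hb : b.PosSemidef := h.1.1.submatrix Sum.inr
  obtain ⟨r, hr⟩ := exists_smul_star_dotProduct_mulVec_eq_one hb hbv
  set w := r • v with hw
  have split {d : Matrix n n ℂ} (hd : (fromBlocks a d dᴴ b).PosSemidef) (hdw : d *ᵥ w = 0) :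
      (fromBlocks a d dᴴ b - prodMatrix 0 1 (b *ᵥ w)).PosSemidef := by
    have h₀ := posSemidef_sub_vecMulVec hd (v := Sum.elim 0 w) (by
      simpa [fromBlocks_mulVec, hdw, dotProduct, Fintype.sum_sum_type] using hr)
    simpa [fromBlocks_mulVec, hdw, prodMatrix] using h₀
  refine h.mem_of_sub_mem (prodMatrix_mem_pptCone 0 1 (b *ᵥ w)) ⟨split h.1.1 ?_, ?_⟩ ?_
    (prodMatrix_mem_separableCone _ _ _)
  · rw [hw, mulVec_smul, hcv, smul_zero]
  · have h' := h.1.2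
    rw [partialTranspose_fromBlocks] at h'
    rw [map_sub, partialTranspose_prodMatrix, partialTranspose_fromBlocks]
    simpa using split (d := cᴴ) (by simpa using h') (by rw [hw, mulVec_smul, hcv', smul_zero])
  · exact prodMatrix_ne_zero (.inr one_ne_zero) (by rintro h₀; simp [h₀] at hr)

lemma mul_conjTranspose_eq_of_ker_le {P d : Matrix n n ℂ} (ha : a.IsHermitian)
    (hP : P * a = a) (hker : ∀ v, a *ᵥ v = 0 → d *ᵥ v = 0) : d * Pᴴ = d := by
  have haP : a * Pᴴ = a := by simpa [ha.eq] using congrArg conjTranspose hP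
  refine mulVec_injective (funext fun v ↦ ?_)
  have hv : d *ᵥ (v - Pᴴ *ᵥ v) = 0 := hker _ (by rw [mulVec_sub, mulVec_mulVec, haP, sub_self])
  rw [← mulVec_mulVec, eq_comm, ← sub_eq_zero, ← mulVec_sub, hv]

lemma localCongruence_fromBlocks_eq_self {P : Matrix n n ℂ} (ha : a.IsHermitian)
    (hb : b.IsHermitian) (hP : P * a = a)
    (hker : ∀ v, a *ᵥ v = 0 → b *ᵥ v = 0 ∧ c *ᵥ v = 0 ∧ cᴴ *ᵥ v = 0) :
    localCongruence P (fromBlocks a c cᴴ b) = fromBlocks a c cᴴ b := by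
  have right {d : Matrix n n ℂ} (hd : ∀ v, a *ᵥ v = 0 → d *ᵥ v = 0) : d * Pᴴ = d :=
    mul_conjTranspose_eq_of_ker_le ha hP hd
  have left {d : Matrix n n ℂ} (hd : ∀ v, a *ᵥ v = 0 → dᴴ *ᵥ v = 0) : P * d = d := by
    simpa using congrArg conjTranspose (right hd)
  rw [localCongruence_fromBlocks, hP, left (d := b) fun v hv ↦ hb.eq.symm ▸ (hker v hv).1,
    left (d := c) fun v hv ↦ (hker v hv).2.2,
    left (d := cᴴ) fun v hv ↦ c.conjTranspose_conjTranspose.symm ▸ (hker v hv).2.1,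
    right fun _ hv ↦ hv, right fun v hv ↦ (hker v hv).1, right fun v hv ↦ (hker v hv).2.1,
    right fun v hv ↦ (hker v hv).2.2]

/-- Unless a product splits off, `ρ` is supported on the range of its corner `a`, and a local
congruence turns `a` into the identity. -/
lemma IsExtremeRay.mem_separableCone_of_corner_one {k : ℕ} (hk : a.rank = k)
    (hone : ∀ c b : Matrix (Fin k) (Fin k) ℂ, IsExtremeRay (pptCone (Fin k)) (fromBlocks 1 c cᴴ b) →
      fromBlocks 1 c cᴴ b ∈ separableCone (Fin k))
    (hρ : IsExtremeRay (pptCone n) (fromBlocks a c cᴴ b)) :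
    fromBlocks a c cᴴ b ∈ separableCone n := by
  classical
  by_cases hker : ∃ v, a *ᵥ v = 0 ∧ b *ᵥ v ≠ 0
  · obtain ⟨v, hav, hbv⟩ := hker
    exact hρ.mem_separableCone_of_mulVec_ne_zero hav hbv
  push Not at hker
  have ha : a.PosSemidef := hρ.1.1.submatrix Sum.inl
  have hb : b.PosSemidef := hρ.1.1.submatrix Sum.inr
  obtain ⟨F, L, haF, hLF⟩ := exists_eq_mul_conjTranspose_of_rank_eq ha hk
  have hFL : localCongruence F (localCongruence L (fromBlocks a c cᴴ b)) =
      fromBlocks a c cᴴ b := by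
    rw [localCongruence_localCongruence]
    refine localCongruence_fromBlocks_eq_self ha.1 hb.1 ?_ fun v hv ↦
      ⟨hker v hv, mulVec_eq_zero_of_fromBlocks_mem_pptCone hρ.1 hv⟩
    rw [haF, ← Matrix.mul_assoc, Matrix.mul_assoc F, hLF, Matrix.mul_one]
  have hσ := hρ.map_of_leftInverse ((localCongruence L).restrictScalars ℝ)
    ((localCongruence F).restrictScalars ℝ) (fun _ ↦ localCongruence_mem_pptCone L)
    (fun _ ↦ localCongruence_mem_pptCone F)
    (fun M ↦ by simp [localCongruence_localCongruence, hLF, localCongruence_one]) hFL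
  have hcorner : localCongruence L (fromBlocks a c cᴴ b) =
      fromBlocks 1 (L * c * Lᴴ) (L * c * Lᴴ)ᴴ (L * b * Lᴴ) := by
    have haL : L * a * Lᴴ = 1 := by
      calc L * a * Lᴴ = (L * F) * (L * F)ᴴ := by
            rw [haF, conjTranspose_mul]; simp only [Matrix.mul_assoc]
        _ = 1 := by rw [hLF, conjTranspose_one, Matrix.mul_one]
    rw [localCongruence_fromBlocks, haL]
    simp only [conjTranspose_mul, conjTranspose_conjTranspose, Matrix.mul_assoc]
  rw [← hFL, hcorner]
  refine localCongruence_mem_separableCone F (hone _ _ ?_)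
  rw [← hcorner]
  exact hσ

end Kernel

/-! ### Normal completion of a `3 × 3` matrix -/

section Completion

lemma exists_eq_mul_star_self {K : Type*} [Field K] [StarRing K] (x : K) :
    ∃ ω, ω * star ω = 1 ∧ x = ω * star x := by
  obtain ⟨ω, hω, h⟩ := exists_smul_eq_of_vecMulVec_star_self_eq (x := fun _ : Unit ↦ x)
    (z := fun _ ↦ star x) (by ext; simp [vecMulVec_apply, mul_comm])
  exact ⟨ω, hω, congrFun h ()⟩

/-- With `J (x₁, x₂) = (star x₂, star x₁)`, this reads `x = η J y`. -/
lemma exists_eq_mul_star_swap {K : Type*} [Field K] [StarRing K] {x₁ x₂ y₁ y₂ : K}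
    (h₁ : x₁ * star x₁ = y₂ * star y₂) (h₂ : x₂ * star x₂ = y₁ * star y₁)
    (h₁₂ : x₁ * star x₂ = y₁ * star y₂) :
    ∃ η, η * star η = 1 ∧ x₁ = η * star y₂ ∧ x₂ = η * star y₁ := by
  have h₂₁ : x₂ * star x₁ = y₂ * star y₁ := by simpa [mul_comm] using congrArg star h₁₂
  obtain ⟨η, hη, h⟩ := exists_smul_eq_of_vecMulVec_star_self_eq (x := ![x₁, x₂])
    (z := ![star y₂, star y₁]) (by
      ext i j
      fin_cases i <;> fin_cases j <;> simp [vecMulVec_apply, h₁, h₂, h₁₂, h₂₁, mul_comm])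
  exact ⟨η, hη, congrFun h 0, congrFun h 1⟩

lemma eq_or_eq_swap_of_mul_eq_of_add_eq {R : Type*} [CommRing R] [NoZeroDivisors R] {a b c d : R}
    (hmul : a * b = c * d) (hadd : a + b = c + d) : (a = c ∧ b = d) ∨ (a = d ∧ b = c) := by
  have h : (a - c) * (a - d) = 0 := by linear_combination a * hadd - hmul
  obtain h | h := mul_eq_zero.1 h
  · exact .inl ⟨sub_eq_zero.1 h, by linear_combination hadd - h⟩
  · exact .inr ⟨sub_eq_zero.1 h, by linear_combination hadd - h⟩

lemma normSq_eq_or_eq_swap {K : Type*} [Field K] [StarRing K] {x₁ x₂ y₁ y₂ : K}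
    (hadd : x₁ * star x₁ + x₂ * star x₂ = y₁ * star y₁ + y₂ * star y₂)
    (h₁₂ : x₁ * star x₂ = y₁ * star y₂) :
    (x₁ * star x₁ = y₁ * star y₁ ∧ x₂ * star x₂ = y₂ * star y₂) ∨
      (x₁ * star x₁ = y₂ * star y₂ ∧ x₂ * star x₂ = y₁ * star y₁) := by
  have h₂₁ : x₂ * star x₁ = y₂ * star y₁ := by simpa [mul_comm] using congrArg star h₁₂
  exact eq_or_eq_swap_of_mul_eq_of_add_eq
    (by linear_combination x₂ * star x₁ * h₁₂ + y₁ * star y₂ * h₂₁) hadd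

lemma normSq_eq_of_mul_eq {ω p q r α₁ α₂ : ℂ} (hω : ω * star ω = 1)
    (hqr : q * star q ≠ r * star r)
    (h₁ : p * (ω * α₁) + q * (ω * α₂) = star p * α₁ + star r * α₂)
    (h₂ : r * (ω * α₁) + p * (ω * α₂) = star q * α₁ + star p * α₂) :
    α₁ * star α₁ = α₂ * star α₂ := by
  have hωnorm : ‖ω‖ = 1 := by
    have h := congrArg norm hω
    rwa [norm_mul, norm_star, norm_one, mul_self_eq_one_iff, or_iff_left
      (by linarith [norm_nonneg ω])] at h
  have hg : ω * q - star r ≠ 0 := fun h ↦ hqr <| by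
    have hr : r = star (ω * q) := by rw [sub_eq_zero.1 h, star_star]
    rw [hr, star_star, star_mul']
    linear_combination -(q * star q) * hω
  have hs₁ : (ω * p - star p) * α₁ = -((ω * q - star r) * α₂) := by linear_combination h₁
  have hs₂ : (ω * p - star p) * α₂ = ω * (star (ω * q - star r) * α₁) := by
    simp only [star_sub, star_mul', star_star]
    linear_combination h₂ - star q * α₁ * hω
  have hn₁ := congrArg norm hs₁
  have hn₂ := congrArg norm hs₂
  rw [norm_mul, norm_neg, norm_mul] at hn₁
  rw [norm_mul, norm_mul, norm_mul, hωnorm, norm_star, one_mul] at hn₂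
  have h : (‖ω * p - star p‖ + ‖ω * q - star r‖) * (‖α₁‖ - ‖α₂‖) = 0 := by
    linear_combination hn₁ - hn₂
  have hα : ‖α₁‖ = ‖α₂‖ := sub_eq_zero.1 ((mul_eq_zero.1 h).resolve_left
    (add_pos_of_nonneg_of_pos (norm_nonneg _) (norm_pos_iff.2 hg)).ne')
  simp only [Complex.star_def, Complex.mul_conj', hα]

lemma exists_eq_mul_star_swap_of_mul_eq {p q r α₁ α₂ β₁ β₂ : ℂ}
    (hne : q * star q + α₁ * star α₁ ≠ r * star r + β₁ * star β₁)
    (hadd : β₁ * star β₁ + β₂ * star β₂ = α₁ * star α₁ + α₂ * star α₂)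
    (h₁₂ : β₁ * star β₂ = α₁ * star α₂) (h₁ : p * β₁ + q * β₂ = star p * α₁ + star r * α₂)
    (h₂ : r * β₁ + p * β₂ = star q * α₁ + star p * α₂) :
    ∃ θ, θ * star θ = 1 ∧ β₁ = θ * star α₂ ∧ β₂ = θ * star α₁ := by
  obtain ⟨hβ₁, hβ₂⟩ | ⟨hβ₁, hβ₂⟩ := normSq_eq_or_eq_swap hadd h₁₂
  · have h₂₁ : β₂ * star β₁ = α₂ * star α₁ := by simpa [mul_comm] using congrArg star h₁₂
    obtain ⟨ω, hω, hβ⟩ := exists_smul_eq_of_vecMulVec_star_self_eq (x := ![β₁, β₂])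
      (z := ![α₁, α₂]) (by
        ext i j
        fin_cases i <;> fin_cases j <;> simpa [vecMulVec_apply])
    obtain rfl : β₁ = ω * α₁ := congrFun hβ 0
    obtain rfl : β₂ = ω * α₂ := congrFun hβ 1
    have hα : α₁ * star α₁ = α₂ * star α₂ :=
      normSq_eq_of_mul_eq hω (fun h ↦ hne (by rw [h, hβ₁])) h₁ h₂
    exact exists_eq_mul_star_swap (hβ₁.trans hα) (hβ₂.trans hα.symm) h₁₂
  · exact exists_eq_mul_star_swap hβ₁ hβ₂ h₁₂

lemma exists_star_mul_sub_mul_eq {K : Type*} [Field K] [StarRing K] {a b : K}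
    (hab : a * star a ≠ b * star b) (u : K) : ∃ h, star h * a - h * b = u := by
  have hΔ : a * star a - b * star b ≠ 0 := sub_ne_zero.2 hab
  have hΔstar : star (a * star a - b * star b) = a * star a - b * star b := by
    simp [mul_comm]
  refine ⟨(star b * u + a * star u) / (a * star a - b * star b), ?_⟩
  rw [star_div₀, hΔstar, div_mul_eq_mul_div, div_mul_eq_mul_div, ← sub_div, div_eq_iff hΔ]
  simp only [star_add, star_mul', star_star]
  ring

/-- In terms of `P = [p, q; r, p]`, `Q = P - p`, `e = η J d` and `β = θ J α`, where
`J (x₁, x₂) = (star x₂, star x₁)`, these are the equations `Pᴴ d - ω P e = star f d - ω f e` and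
`αᴴ d = ω βᴴ e`. As `J Q J = Qᴴ`, the first one says that `Qᴴ d - star (f - p) d` is fixed by the
involution `ω η J`, so its two components are equivalent. -/
lemma exists_completion_coefficients {d₁ d₂ θ η : ℂ} (hd : d₁ * star d₁ ≠ d₂ * star d₂)
    (hθ : θ * star θ = 1) (hη : η * star η = 1) (p q r α₁ α₂ : ℂ) :
    ∃ ω f, ω * star ω = 1 ∧
      star p * d₁ + star r * d₂ - (p * (ω * (η * star d₂)) + q * (ω * (η * star d₁))) =
        star f * d₁ - f * (ω * (η * star d₂)) ∧
      star q * d₁ + star p * d₂ - (r * (ω * (η * star d₂)) + p * (ω * (η * star d₁))) =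
        star f * d₂ - f * (ω * (η * star d₁)) ∧
      star α₁ * d₁ + star α₂ * d₂ =
        star (θ * star α₂) * (ω * (η * star d₂)) + star (θ * star α₁) * (ω * (η * star d₁)) := by
  obtain ⟨ζ, hζ, hX⟩ := exists_eq_mul_star_self (star α₁ * d₁ + star α₂ * d₂)
  set ξ := ζ * θ with hξ
  have hξξ : ξ * star ξ = 1 := by rw [hξ, star_mul']; linear_combination θ * star θ * hζ + hθ
  obtain ⟨h, hh⟩ := exists_star_mul_sub_mul_eq (a := d₁) (b := ξ * star d₂)
    (fun h ↦ hd (by rw [h, star_mul', star_star]; linear_combination d₂ * star d₂ * hξξ))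
    (star r * d₂ - ξ * q * star d₁)
  have hh' := congrArg star hh
  have hωη (x : ℂ) : ζ * θ * star η * (η * x) = ξ * x := by linear_combination ζ * θ * x * hη
  refine ⟨ζ * θ * star η, p + h, ?_, ?_, ?_, ?_⟩
  · simp only [star_mul', star_star]
    linear_combination η * star η * (θ * star θ * hζ + hθ) + hη
  · rw [hωη, hωη, star_add]
    linear_combination -hh
  · rw [hωη, hωη, star_add]
    simp only [star_sub, star_mul', star_star] at hh'
    linear_combination ξ * hh' - (star q * d₁ - star h * d₂) * hξξ
  · rw [hωη, hωη, hX]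
    simp only [star_add, star_mul', star_star]
    linear_combination -(ζ * (α₁ * star d₁ + α₂ * star d₂)) * hθ

variable {c : Matrix (Fin 3) (Fin 3) ℂ} {d e μ : Fin 3 → ℂ}

/-- The trace of `[c, cᴴ] c` vanishes. -/
lemma apply_zero_zero_eq_of_commutator_eq_diagonal (hc : c * cᴴ - cᴴ * c = diagonal μ)
    (hμ₂ : μ 2 = 0) (hμ : μ ≠ 0) : μ 0 + μ 1 = 0 ∧ μ 0 ≠ 0 ∧ c 1 1 = c 0 0 := by
  have hsum : μ 0 + μ 1 = 0 := by
    have h : (c * cᴴ - cᴴ * c).trace = 0 := by rw [trace_sub, trace_mul_comm, sub_self]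
    simpa [hc, Fin.sum_univ_three, hμ₂] using h
  have hμ₀ : μ 0 ≠ 0 := fun h₀ ↦ hμ <| by
    ext i
    fin_cases i
    exacts [h₀, by simpa [h₀] using hsum, hμ₂]
  refine ⟨hsum, hμ₀, ?_⟩
  have h : ((c * cᴴ - cᴴ * c) * c).trace = 0 := by
    rw [Matrix.sub_mul, trace_sub, Matrix.mul_assoc, trace_mul_comm, sub_self]
  simp only [hc, trace, Fin.sum_univ_three, diag_apply, diagonal_mul, hμ₂, zero_mul, add_zero] at h
  have h' : μ 0 * (c 1 1 - c 0 0) = 0 := by linear_combination c 1 1 * hsum - h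
  exact sub_eq_zero.1 ((mul_eq_zero.1 h').resolve_left hμ₀)

lemma apply_two_eq_zero_of_vecMulVec_sub_eq_diagonal
    (hed : vecMulVec e (star e) - vecMulVec d (star d) = diagonal μ) (hμ₂ : μ 2 = 0)
    (hμ₀ : μ 0 ≠ 0) : e 2 = 0 ∧ d 2 = 0 := by
  have entry (i j) : e i * star (e j) - d i * star (d j) = diagonal μ i j := by
    simp [← hed, vecMulVec_apply]
  have h₀₀ := entry 0 0
  have h₀₂ := entry 0 2
  have h₂₀ := entry 2 0
  have h₂₂ := entry 2 2
  simp only [diagonal_apply_eq, hμ₂] at h₀₀ h₂₂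
  rw [diagonal_apply_ne _ (by decide)] at h₀₂ h₂₀
  have he : e 2 = 0 := by
    have h : e 2 * star (e 2) * μ 0 = 0 := by
      linear_combination -(e 2 * star (e 2)) * h₀₀ + e 2 * star (e 0) * h₀₂
        + d 0 * star (d 2) * h₂₀ - d 0 * star (d 0) * h₂₂
    simpa [hμ₀] using h
  exact ⟨he, by simpa [he] using h₂₂⟩

lemma exists_last_row_eq_of_commutator_eq_diagonal (hc : c * cᴴ - cᴴ * c = diagonal μ)
    (hμ₂ : μ 2 = 0) (hμ₀ : μ 0 ≠ 0) (hp : c 1 1 = c 0 0) :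
    ∃ θ, θ * star θ = 1 ∧ star (c 2 0) = θ * star (c 1 2) ∧ star (c 2 1) = θ * star (c 0 2) := by
  have entry (i j) : (c * cᴴ) i j - (cᴴ * c) i j = diagonal μ i j := by rw [← hc, Matrix.sub_apply]
  have h₀₀ := entry 0 0
  have h₀₁ := entry 0 1
  have h₀₂ := entry 0 2
  have h₁₂ := entry 1 2
  have h₂₂ := entry 2 2
  rw [diagonal_apply_ne _ (by decide)] at h₀₁ h₀₂ h₁₂
  simp only [diagonal_apply_eq, hμ₂, mul_apply, Fin.sum_univ_three, conjTranspose_apply, hp]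
    at h₀₀ h₀₁ h₀₂ h₁₂ h₂₂
  -- Subtracting the scalar `c 2 2` does not change the commutator and makes the last entry zero.
  refine exists_eq_mul_star_swap_of_mul_eq (p := c 0 0 - c 2 2) (q := c 0 1) (r := c 1 0)
    (fun h ↦ hμ₀ ?_) ?_ ?_ ?_ ?_
  · rw [star_star] at h
    linear_combination h - h₀₀
  · simp only [star_star]
    linear_combination h₂₂
  · rw [star_star]
    linear_combination -h₀₁
  · rw [star_sub]
    linear_combination h₀₂
  · rw [star_sub]
    linear_combination h₁₂

lemma exists_normal_completion_of_diagonal (hc : c * cᴴ - cᴴ * c = diagonal μ)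
    (hed : vecMulVec e (star e) - vecMulVec d (star d) = diagonal μ) (hμ₂ : μ 2 = 0)
    (hμ : μ ≠ 0) :
    ∃ ω f : ℂ, ω * star ω = 1 ∧ cᴴ *ᵥ d - c *ᵥ (ω • e) = star f • d - f • ω • e := by
  obtain ⟨hsum, hμ₀, hp⟩ := apply_zero_zero_eq_of_commutator_eq_diagonal hc hμ₂ hμ
  obtain ⟨he₂, hd₂⟩ := apply_two_eq_zero_of_vecMulVec_sub_eq_diagonal hed hμ₂ hμ₀
  have entry (i j) : e i * star (e j) - d i * star (d j) = diagonal μ i j := by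
    simp [← hed, vecMulVec_apply]
  have h₀₀ : e 0 * star (e 0) - d 0 * star (d 0) = μ 0 := by simpa using entry 0 0
  have h₁₁ : e 1 * star (e 1) - d 1 * star (d 1) = μ 1 := by simpa using entry 1 1
  have h₀₁ : e 0 * star (e 1) = d 0 * star (d 1) := by simpa [sub_eq_zero] using entry 0 1
  obtain ⟨h, -⟩ | ⟨h₁, h₂⟩ := normSq_eq_or_eq_swap (by linear_combination h₀₀ + h₁₁ + hsum) h₀₁
  · exact absurd (by rw [← h₀₀, h, sub_self]) hμ₀
  obtain ⟨η, hη, he₀, he₁⟩ := exists_eq_mul_star_swap h₁ h₂ h₀₁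
  obtain ⟨θ, hθ, hβ₁, hβ₂⟩ := exists_last_row_eq_of_commutator_eq_diagonal hc hμ₂ hμ₀ hp
  obtain ⟨ω, f, hω, hf₀, hf₁, hf₂⟩ := exists_completion_coefficients (d₁ := d 0) (d₂ := d 1)
    (fun h ↦ hμ₀ (by rw [← h₀₀, h₁, h, sub_self])) hθ hη (c 0 0 - c 2 2) (c 0 1) (c 1 0) (c 0 2)
    (c 1 2)
  rw [← he₀, ← he₁] at hf₀ hf₁ hf₂
  rw [← hβ₁, ← hβ₂, star_star, star_star] at hf₂
  rw [star_sub] at hf₀ hf₁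
  refine ⟨ω, f + c 2 2, hω, funext fun i ↦ ?_⟩
  fin_cases i <;>
    simp only [Fin.zero_eta, Fin.mk_one, Fin.reduceFinMk, Pi.sub_apply, Pi.smul_apply, smul_eq_mul,
      mulVec, dotProduct, Fin.sum_univ_three, conjTranspose_apply, he₂, hd₂, hp, star_add]
  · linear_combination hf₀
  · linear_combination hf₁
  · linear_combination hf₂

lemma det_vecMulVec_sub_vecMulVec {R : Type*} [CommRing R] (u v x y : Fin 3 → R) :
    (vecMulVec u v - vecMulVec x y).det = 0 := by
  simp only [det_fin_three, Matrix.sub_apply, vecMulVec_apply]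
  ring

lemma exists_normal_completion
    (hcomm : c * cᴴ - cᴴ * c = vecMulVec e (star e) - vecMulVec d (star d))
    (hc : ¬IsStarNormal c) :
    ∃ ω f : ℂ, ω * star ω = 1 ∧ cᴴ *ᵥ d - c *ᵥ (ω • e) = star f • d - f • ω • e := by
  set K := vecMulVec e (star e) - vecMulVec d (star d) with hK
  obtain ⟨V, hV, μ, hμ, hμ₂⟩ := exists_unitary_conj_eq_diagonal_of_det_eq_zero (K := K)
    (by simp [IsHermitian, hK, conjTranspose_vecMulVec])
    (det_vecMulVec_sub_vecMulVec e (star e) d (star d)) 2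
  have hVV : V * Vᴴ = 1 := mem_unitaryGroup_iff.1 hV
  have hAV (A : Matrix (Fin 3) (Fin 3) ℂ) : A * V * Vᴴ = A := by
    rw [Matrix.mul_assoc, hVV, Matrix.mul_one]
  have hconj (A B : Matrix (Fin 3) (Fin 3) ℂ) : Vᴴ * A * V * (Vᴴ * B * V) = Vᴴ * (A * B) * V := by
    simp only [← Matrix.mul_assoc, hAV]
  have hc' : (Vᴴ * c * V)ᴴ = Vᴴ * cᴴ * V := by simp [Matrix.mul_assoc]
  have hvec (y : Fin 3 → ℂ) :
      vecMulVec (Vᴴ *ᵥ y) (star (Vᴴ *ᵥ y)) = Vᴴ * vecMulVec y (star y) * V := by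
    rw [mul_vecMulVec, vecMulVec_mul, star_mulVec, conjTranspose_conjTranspose]
  have hμ_ne : μ ≠ 0 := by
    rintro rfl
    refine hc ⟨(sub_eq_zero.1 ?_).symm⟩
    calc c * cᴴ - cᴴ * c = V * Vᴴ * K * (V * Vᴴ) := by
          rw [hcomm, hVV, Matrix.one_mul, Matrix.mul_one]
      _ = V * (Vᴴ * K * V) * Vᴴ := by simp only [Matrix.mul_assoc]
      _ = 0 := by simp [hμ]
  obtain ⟨ω, f, hω, h⟩ := exists_normal_completion_of_diagonal
    (c := Vᴴ * c * V) (e := Vᴴ *ᵥ e) (d := Vᴴ *ᵥ d)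
    (by rw [hc', hconj, hconj, ← Matrix.sub_mul, ← Matrix.mul_sub, hcomm, hμ])
    (by rw [hvec, hvec, ← Matrix.sub_mul, ← Matrix.mul_sub, ← hK, hμ]) hμ₂ hμ_ne
  refine ⟨ω, f, hω, ?_⟩
  simpa [hc', mulVec_sub, mulVec_smul, hVV, hAV, ← Matrix.mul_assoc] using congrArg (V *ᵥ ·) h

end Completion

section BorderedMatrix

variable {n : Type*} [Fintype n] {c : Matrix n n ℂ} {d e : n → ℂ} {f : ℂ}

lemma dotProduct_star_self_eq_of_commutator_eq
    (hcomm : c * cᴴ - cᴴ * c = vecMulVec e (star e) - vecMulVec d (star d)) :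
    e ⬝ᵥ star e = d ⬝ᵥ star d := by
  have h := congrArg trace hcomm
  rwa [trace_sub, trace_mul_comm, sub_self, trace_sub, trace_vecMulVec, trace_vecMulVec, eq_comm,
    sub_eq_zero] at h

/-- The matrix `[c, d; eᴴ, f]`, used to realize `c` as a corner of a normal matrix. -/
def borderedMatrix (c : Matrix n n ℂ) (d e : n → ℂ) (f : ℂ) : Matrix (n ⊕ Unit) (n ⊕ Unit) ℂ :=
  fromBlocks c (replicateCol Unit d) (replicateRow Unit (star e)) (f • 1)

lemma conjTranspose_borderedMatrix {n : Type*} (c : Matrix n n ℂ) (d e : n → ℂ)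
    (f : ℂ) : (borderedMatrix c d e f)ᴴ = borderedMatrix cᴴ e d (star f) := by
  simp [borderedMatrix, fromBlocks_conjTranspose]

lemma isStarNormal_borderedMatrix
    (hcomm : c * cᴴ - cᴴ * c = vecMulVec e (star e) - vecMulVec d (star d))
    (hf : cᴴ *ᵥ d - c *ᵥ e = star f • d - f • e) : IsStarNormal (borderedMatrix c d e f) := by
  have hde := dotProduct_star_self_eq_of_commutator_eq hcomm
  have hf' := congrArg star hf
  simp only [star_sub, star_mulVec, star_smul, conjTranspose_conjTranspose, star_star] at hf'
  refine ⟨?_⟩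
  rw [commute_iff_eq, star_eq_conjTranspose, conjTranspose_borderedMatrix, borderedMatrix,
    borderedMatrix, fromBlocks_multiply, fromBlocks_multiply]
  congr 1
  · rw [← vecMulVec_eq, ← vecMulVec_eq, eq_comm, ← sub_eq_zero, add_sub_add_comm, hcomm]
    abel
  · ext i j
    have h := congrFun hf i
    simp only [Pi.sub_apply, Pi.smul_apply, smul_eq_mul, mulVec, dotProduct] at h
    simp only [Matrix.add_apply, Matrix.mul_apply, Matrix.smul_apply, smul_eq_mul, Matrix.mul_smul,
      Matrix.mul_one, replicateCol_apply]
    linear_combination h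
  · ext i j
    have h := congrFun hf' j
    simp only [Pi.sub_apply, Pi.smul_apply, Pi.star_apply, smul_eq_mul, vecMul, dotProduct] at h
    simp only [Matrix.add_apply, Matrix.mul_apply, Matrix.smul_apply, smul_eq_mul, Matrix.smul_mul,
      Matrix.one_mul, replicateRow_apply, Pi.star_apply]
    linear_combination h
  · ext
    simpa [Matrix.mul_apply, dotProduct, mul_comm] using hde.symm

variable [DecidableEq n]

lemma localCongruence_gramBlocks_borderedMatrix (c : Matrix n n ℂ) (d e : n → ℂ) (f : ℂ) :
    localCongruence (fromCols 1 0) (gramBlocks (borderedMatrix c d e f)) =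
      fromBlocks 1 c cᴴ (cᴴ * c + vecMulVec e (star e)) := by
  rw [gramBlocks, localCongruence_fromBlocks, conjTranspose_borderedMatrix, borderedMatrix,
    borderedMatrix, fromBlocks_multiply, conjTranspose_fromCols_eq_fromRows_conjTranspose]
  simp [fromCols_mul_fromBlocks, fromCols_mul_fromRows, ← vecMulVec_eq]

lemma IsExtremeRay.mem_separableCone_of_normal_completion
    (hcomm : c * cᴴ - cᴴ * c = vecMulVec e (star e) - vecMulVec d (star d))
    (hf : cᴴ *ᵥ d - c *ᵥ e = star f • d - f • e) (hd : d ≠ 0)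
    (hρ : IsExtremeRay (pptCone n) (fromBlocks 1 c cᴴ (cᴴ * c + vecMulVec e (star e)))) :
    fromBlocks 1 c cᴴ (cᴴ * c + vecMulVec e (star e)) ∈ separableCone n := by
  obtain ⟨z, y, hy, hNy⟩ := exists_mulVec_eq_smul (borderedMatrix c d e f)
  refine hρ.mem_separableCone_of_sub_localCongruence_gramBlocks
    (isStarNormal_borderedMatrix hcomm hf) hNy (V := fromCols 1 0) (fun h ↦ hd ?_) ?_
  · -- An eigenvector supported on the added coordinate would force `d = 0`.
    have hinl (i) : y (.inl i) = 0 := by simpa [fromCols_mulVec] using congrFun h i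
    have hinr : y (.inr ()) ≠ 0 := fun hinr ↦ hy (by ext (i | i) <;> simp [hinl, hinr])
    ext i
    have hi := congrFun hNy (.inl i)
    simpa [borderedMatrix, mulVec, dotProduct, hinl, hinr] using hi
  · rw [localCongruence_gramBlocks_borderedMatrix, sub_self]
    exact zero_mem _

end BorderedMatrix

/-! ### The theorem of Størmer and Woronowicz -/

section StormerWoronowicz

variable {n : Type*} [Fintype n] {b c : Matrix n n ℂ}

lemma trace_sub_conjTranspose_mul_self (b c : Matrix n n ℂ) :
    (b - cᴴ * c).trace = (b - c * cᴴ).trace := by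
  rw [trace_sub, trace_sub, trace_mul_comm]

variable [DecidableEq n]

lemma posSemidef_sub_conjTranspose_mul_self (h : (fromBlocks 1 c cᴴ b).PosSemidef) :
    (b - cᴴ * c).PosSemidef := by
  let : Invertible (1 : Matrix n n ℂ) := invertibleOne
  simpa using (PosDef.fromBlocks₁₁ c b PosDef.one).1 h

lemma posSemidef_sub_mul_conjTranspose_self (h : fromBlocks 1 c cᴴ b ∈ pptCone n) :
    (b - c * cᴴ).PosSemidef := by
  have h' := h.2
  rw [partialTranspose_fromBlocks] at h'
  simpa using posSemidef_sub_conjTranspose_mul_self (c := cᴴ) (by simpa using h')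

lemma fromBlocks_one_sub_gramBlocks (b c : Matrix n n ℂ) :
    fromBlocks 1 c cᴴ b - gramBlocks c = fromBlocks 0 0 0 (b - cᴴ * c) := by
  simp [gramBlocks, sub_eq_add_neg, fromBlocks_neg, fromBlocks_add]

lemma IsExtremeRay.mem_separableCone_of_isStarNormal [Nonempty n] (hc : IsStarNormal c)
    (hρ : IsExtremeRay (pptCone n) (fromBlocks 1 c cᴴ b)) :
    fromBlocks 1 c cᴴ b ∈ separableCone n := by
  obtain ⟨z, y, hy, hcy⟩ := exists_mulVec_eq_smul c
  refine hρ.mem_separableCone_of_sub_localCongruence_gramBlocks hc hcy (V := 1)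
    (by rwa [one_mulVec]) ?_
  have hblock : fromBlocks (0 : Matrix n n ℂ) 0 0 (b - cᴴ * c) =
      fromRows (0 : Matrix n n ℂ) 1 * (b - cᴴ * c) * (fromRows (0 : Matrix n n ℂ) 1)ᴴ := by
    rw [fromRows_mul, conjTranspose_fromRows_eq_fromCols_conjTranspose, fromRows_mul_fromCols]
    simp
  have hE : (fromBlocks (0 : Matrix n n ℂ) 0 0 (b - cᴴ * c)).PosSemidef :=
    hblock ▸ (posSemidef_sub_conjTranspose_mul_self hρ.1.1).mul_mul_conjTranspose_same _
  rw [localCongruence_one, fromBlocks_one_sub_gramBlocks]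
  exact ⟨hE, by rwa [partialTranspose_fromBlocks]⟩

/-- The two Schur complements have the same trace, so if one vanishes, so does the other. -/
lemma rank_ne_zero_of_not_isStarNormal (hρ : fromBlocks 1 c cᴴ b ∈ pptCone n)
    (hc : ¬IsStarNormal c) : (b - cᴴ * c).rank ≠ 0 ∧ (b - c * cᴴ).rank ≠ 0 := by
  have hE := posSemidef_sub_conjTranspose_mul_self hρ.1
  have hD := posSemidef_sub_mul_conjTranspose_self hρ
  have hED : b - cᴴ * c = 0 ↔ b - c * cᴴ = 0 := by
    rw [← hE.trace_eq_zero_iff, trace_sub_conjTranspose_mul_self, hD.trace_eq_zero_iff]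
  have hne : b - cᴴ * c ≠ 0 := fun h ↦
    hc ⟨(sub_eq_zero.1 h).symm.trans (sub_eq_zero.1 (hED.1 h))⟩
  exact ⟨mt rank_eq_zero_iff_eq_zero.1 hne, mt rank_eq_zero_iff_eq_zero.1 (mt hED.2 hne)⟩

lemma IsExtremeRay.rank_sub_conjTranspose_mul_self_add_le [Nonempty n]
    (hρ : IsExtremeRay (pptCone n) (fromBlocks 1 c cᴴ b)) :
    (Fintype.card n + (b - cᴴ * c).rank) ^ 2 + (Fintype.card n + (b - c * cᴴ).rank) ^ 2 ≤
      (2 * Fintype.card n) ^ 2 + 1 := by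
  have hE := card_add_rank_le_rank_fromBlocks (posSemidef_sub_conjTranspose_mul_self hρ.1.1)
  have hD := card_add_rank_le_rank_fromBlocks (c := cᴴ) (b := b)
    (by simpa using posSemidef_sub_mul_conjTranspose_self hρ.1)
  have hne : fromBlocks 1 c cᴴ b ≠ 0 := fun h ↦ by
    rw [← fromBlocks_zero, fromBlocks_inj] at h
    exact one_ne_zero h.1
  have h := hρ.rank_sq_add_rank_sq_le conjTranspose_partialTranspose hne
  rw [partialTranspose_fromBlocks, Fintype.card_sum, ← two_mul] at h
  rw [conjTranspose_conjTranspose] at hD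
  exact le_trans (by gcongr) h

lemma IsExtremeRay.mem_separableCone_of_rank_eq_one {b c : Matrix (Fin 3) (Fin 3) ℂ}
    (hc : ¬IsStarNormal c) (hE : (b - cᴴ * c).rank = 1) (hD : (b - c * cᴴ).rank = 1)
    (hρ : IsExtremeRay (pptCone (Fin 3)) (fromBlocks 1 c cᴴ b)) :
    fromBlocks 1 c cᴴ b ∈ separableCone (Fin 3) := by
  obtain ⟨e, he⟩ := exists_eq_vecMulVec_of_rank_eq_one
    (posSemidef_sub_conjTranspose_mul_self hρ.1.1) hE
  obtain ⟨d, hd⟩ := exists_eq_vecMulVec_of_rank_eq_one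
    (posSemidef_sub_mul_conjTranspose_self hρ.1) hD
  have hcomm : c * cᴴ - cᴴ * c = vecMulVec e (star e) - vecMulVec d (star d) := by
    rw [← he, ← hd]
    abel
  obtain ⟨ω, f, hω, hf⟩ := exists_normal_completion hcomm hc
  have hωe : vecMulVec (ω • e) (star (ω • e)) = vecMulVec e (star e) := by
    rw [star_smul, smul_vecMulVec, vecMulVec_smul, smul_smul, hω, one_smul]
  have hb : b = cᴴ * c + vecMulVec (ω • e) (star (ω • e)) := by rw [hωe, ← he, add_sub_cancel]
  rw [hb] at hρ ⊢
  refine hρ.mem_separableCone_of_normal_completion (hωe ▸ hcomm) hf ?_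
  rintro rfl
  simp [hd] at hD

lemma eq_three_of_add_sq_add_add_sq_le {n k k' : ℕ} (hn : n ≤ 3) (hk : k ≠ 0) (hk' : k' ≠ 0)
    (h : (n + k) ^ 2 + (n + k') ^ 2 ≤ (2 * n) ^ 2 + 1) : n = 3 ∧ k = 1 ∧ k' = 1 := by
  have : k ≤ 3 := by nlinarith
  have : k' ≤ 3 := by nlinarith
  interval_cases n <;> interval_cases k <;> interval_cases k' <;> simp_all

theorem IsExtremeRay.mem_separableCone_of_corner_eq_one {k : ℕ} (hk : k ≤ 3)
    {b c : Matrix (Fin k) (Fin k) ℂ}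
    (hρ : IsExtremeRay (pptCone (Fin k)) (fromBlocks 1 c cᴴ b)) :
    fromBlocks 1 c cᴴ b ∈ separableCone (Fin k) := by
  obtain rfl | hk₀ := k.eq_zero_or_pos
  · rw [Subsingleton.elim (fromBlocks 1 c cᴴ b) 0]
    exact zero_mem _
  have : Nonempty (Fin k) := ⟨⟨0, hk₀⟩⟩
  by_cases hc : IsStarNormal c
  · exact hρ.mem_separableCone_of_isStarNormal hc
  obtain ⟨hE, hD⟩ := rank_ne_zero_of_not_isStarNormal hρ.1 hc
  have hrank := hρ.rank_sub_conjTranspose_mul_self_add_le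
  rw [Fintype.card_fin] at hrank
  obtain ⟨rfl, hE₁, hD₁⟩ := eq_three_of_add_sq_add_add_sq_le hk hE hD hrank
  exact hρ.mem_separableCone_of_rank_eq_one hc hE₁ hD₁

theorem pptCone_le_closure_separableCone {n : Type*} [Fintype n] (hn : Fintype.card n ≤ 3) :
    pptCone n ≤ (separableCone n).closure := by
  refine bipositiveCone_le_closure_of_isExtremeRay_mem fun ρ hρ ↦ ?_
  obtain ⟨a, c, b, rfl⟩ : ∃ a c b, ρ = fromBlocks a c cᴴ b := by
    refine ⟨ρ.toBlocks₁₁, ρ.toBlocks₁₂, ρ.toBlocks₂₂, ?_⟩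
    have h : ρ.toBlocks₂₁ = ρ.toBlocks₁₂ᴴ := by
      ext i j
      exact (hρ.1.1.1.apply _ _).symm
    rw [← h, fromBlocks_toBlocks]
  exact hρ.mem_separableCone_of_corner_one rfl fun c b ↦
    IsExtremeRay.mem_separableCone_of_corner_eq_one ((rank_le_card_width a).trans hn)

end StormerWoronowicz

/-! ### The matrix algebra `M_p(M_q(ℂ))` -/

section MatPosCone

variable {p q : ℕ}

lemma isPosElem_vecMulVec {n : Type*} [Fintype n] [DecidableEq n] (y : n → ℂ) :
    IsPosElem (vecMulVec y (star y)) := by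
  obtain _ | ⟨⟨i⟩⟩ := isEmpty_or_nonempty n
  · exact ⟨0, Subsingleton.elim _ _⟩
  refine ⟨vecMulVec (Pi.single i 1) (star y), ?_⟩
  simp [star_eq_conjTranspose, conjTranspose_vecMulVec, vecMulVec_mul_vecMulVec]

lemma IsPosElem.smul {R : Type*} [Ring R] [StarRing R] [Module ℝ R] [StarModule ℝ R]
    [IsScalarTower ℝ R R] [SMulCommClass ℝ R R] {x : R} (hx : IsPosElem x) {t : ℝ} (ht : 0 ≤ t) :
    IsPosElem (t • x) := by
  obtain ⟨b, rfl⟩ := hx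
  refine ⟨√t • b, ?_⟩
  rw [star_smul, star_trivial √t, smul_mul_smul_comm, Real.mul_self_sqrt ht]

/-- The cone `matPosCone p q` as a bundled convex cone. -/
def matPosPointedCone (p q : ℕ) :
    PointedCone ℝ (Matrix (Fin p) (Fin p) (Matrix (Fin q) (Fin q) ℂ)) where
  carrier := matPosCone p q
  add_mem' := by
    rintro _ _ ⟨k, s, x, hs, hx, rfl⟩ ⟨k', s', x', hs', hx', rfl⟩
    refine ⟨k + k', Fin.append s s', Fin.append x x', ?_, ?_, by simp [Fin.sum_univ_add]⟩
    · exact fun l ↦ Fin.addCases (by simpa using hs) (by simpa using hs') l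
    · exact fun l ↦ Fin.addCases (by simpa using hx) (by simpa using hx') l
  zero_mem' := ⟨0, Fin.elim0, Fin.elim0, fun l ↦ l.elim0, fun l ↦ l.elim0, by simp⟩
  smul_mem' := by
    rintro t _ ⟨k, s, x, hs, hx, rfl⟩
    refine ⟨k, s, fun l ↦ (t : ℝ) • x l, hs, fun l ↦ (hx l).smul t.2, ?_⟩
    rw [Finset.smul_sum]
    refine Finset.sum_congr rfl fun l _ ↦ ?_
    ext i j : 1
    exact (smul_assoc (t : ℝ) (x l i j) (s l)).symm

lemma tensor_mem_matPosCone {s : Matrix (Fin q) (Fin q) ℂ} {x : Matrix (Fin p) (Fin p) ℂ}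
    (hs : IsPosElem s) (hx : IsPosElem x) : (of fun i j ↦ x i j • s) ∈ matPosCone p q :=
  ⟨1, fun _ ↦ s, fun _ ↦ x, fun _ ↦ hs, fun _ ↦ hx, by simp⟩

lemma IsPosElem.mem_matPosCone_one {S : Matrix (Fin 1) (Fin 1) (Matrix (Fin q) (Fin q) ℂ)}
    (hS : IsPosElem S) : S ∈ matPosCone 1 q := by
  obtain ⟨b, rfl⟩ := hS
  have hs : IsPosElem ((star b * b) 0 0) :=
    ⟨b 0 0, by simp [mul_apply, star_eq_conjTranspose]⟩
  convert tensor_mem_matPosCone hs (x := 1) ⟨1, by simp⟩ using 1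
  ext i j : 2
  rw [Subsingleton.elim i 0, Subsingleton.elim j 0]
  simp

lemma IsPosElem.posSemidef_fromBlocks {n : Type*} [Fintype n] [DecidableEq n]
    {S : Matrix (Fin 2) (Fin 2) (Matrix n n ℂ)} (hS : IsPosElem S) :
    (fromBlocks (S 0 0) (S 0 1) (S 1 0) (S 1 1)).PosSemidef := by
  obtain ⟨b, rfl⟩ := hS
  convert posSemidef_conjTranspose_mul_self (fromBlocks (b 0 0) (b 0 1) (b 1 0) (b 1 1)) using 1
  simp [fromBlocks_conjTranspose, fromBlocks_multiply, mul_apply, star_eq_conjTranspose]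

/-- A matrix over `ℂ² ⊗ ℂⁿ` as an element of `M_2(M_n(ℂ))`. -/
def finTwoOfBlocks {n : Type*} :
    Matrix (n ⊕ n) (n ⊕ n) ℂ →ₗ[ℝ] Matrix (Fin 2) (Fin 2) (Matrix n n ℂ) where
  toFun M := !![M.toBlocks₁₁, M.toBlocks₁₂; M.toBlocks₂₁, M.toBlocks₂₂]
  map_add' M N := by ext i j : 2; fin_cases i <;> fin_cases j <;> rfl
  map_smul' t M := by ext i j : 2; fin_cases i <;> fin_cases j <;> rfl

lemma finTwoOfBlocks_fromBlocks {n : Type*} (S : Matrix (Fin 2) (Fin 2) (Matrix n n ℂ)) :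
    finTwoOfBlocks (fromBlocks (S 0 0) (S 0 1) (S 1 0) (S 1 1)) = S := by
  simp [finTwoOfBlocks, ← eta_fin_two S]

lemma finTwoOfBlocks_prodMatrix {n : Type*} (x₀ x₁ : ℂ) (y : n → ℂ) :
    finTwoOfBlocks (prodMatrix x₀ x₁ y) =
      of fun i j ↦ vecMulVec ![x₀, x₁] (star ![x₀, x₁]) i j • vecMulVec y (star y) := by
  ext i j : 2
  fin_cases i <;> fin_cases j <;>
    simp [finTwoOfBlocks, prodMatrix_eq_fromBlocks, vecMulVec_apply]

lemma finTwoOfBlocks_mem_matPosCone {M : Matrix (Fin q ⊕ Fin q) (Fin q ⊕ Fin q) ℂ}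
    (hM : M ∈ separableCone (Fin q)) : finTwoOfBlocks M ∈ matPosCone 2 q := by
  have hle : separableCone (Fin q) ≤ (matPosPointedCone 2 q).comap finTwoOfBlocks := by
    refine Submodule.span_le.2 ?_
    rintro _ ⟨x₀, x₁, y, rfl⟩
    change finTwoOfBlocks (prodMatrix x₀ x₁ y) ∈ matPosCone 2 q
    rw [finTwoOfBlocks_prodMatrix]
    exact tensor_mem_matPosCone (isPosElem_vecMulVec y) (isPosElem_vecMulVec _)
  exact hle hM

lemma mem_closure_matPosCone_two (hq : q ≤ 3)
    {S : Matrix (Fin 2) (Fin 2) (Matrix (Fin q) (Fin q) ℂ)} (hS : IsPosElem S)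
    (hS' : IsPosElem Sᵀ) : S ∈ closure (matPosCone 2 q) := by
  have hppt : fromBlocks (S 0 0) (S 0 1) (S 1 0) (S 1 1) ∈ pptCone (Fin q) := by
    refine ⟨hS.posSemidef_fromBlocks, ?_⟩
    rw [partialTranspose_fromBlocks]
    exact hS'.posSemidef_fromBlocks
  have hsep := pptCone_le_closure_separableCone (by simpa using hq) hppt
  rw [← finTwoOfBlocks_fromBlocks S]
  exact map_mem_closure (LinearMap.continuous_of_finiteDimensional finTwoOfBlocks) hsep
    fun _ ↦ finTwoOfBlocks_mem_matPosCone

/-- The identification of `M_p(M_q)` with `M_q(M_p)` that exchanges the tensor factors. -/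
def swapFactors {m n α : Type*} (S : Matrix m m (Matrix n n α)) : Matrix n n (Matrix m m α) :=
  of fun k l ↦ of fun i j ↦ S i j k l

lemma continuous_swapFactors {m n α : Type*} [TopologicalSpace α] :
    Continuous (swapFactors : Matrix m m (Matrix n n α) → Matrix n n (Matrix m m α)) := by
  unfold swapFactors
  fun_prop

lemma swapFactors_mem_matPosCone {S : Matrix (Fin p) (Fin p) (Matrix (Fin q) (Fin q) ℂ)}
    (hS : S ∈ matPosCone p q) : swapFactors S ∈ matPosCone q p := by
  obtain ⟨k, s, x, hs, hx, rfl⟩ := hS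
  refine ⟨k, x, s, hx, hs, ?_⟩
  ext i j k l
  simp [swapFactors, Matrix.sum_apply, mul_comm]

lemma isPosElem_swapFactors {m n : Type*} [Fintype m] [DecidableEq m] [Fintype n] [DecidableEq n]
    {S : Matrix m m (Matrix n n ℂ)} (hS : IsPosElem S) : IsPosElem (swapFactors S) := by
  obtain ⟨b, rfl⟩ := hS
  refine ⟨swapFactors b, ?_⟩
  ext k l i j
  simp only [swapFactors, mul_apply, Matrix.sum_apply, star_eq_conjTranspose, conjTranspose_apply,
    of_apply]
  exact Finset.sum_comm

/-- The partial transposes in the two tensor factors differ by a full transpose. -/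
lemma isPosElem_transpose_swapFactors {m n : Type*} [Fintype m] [DecidableEq m] [Fintype n]
    [DecidableEq n] {S : Matrix m m (Matrix n n ℂ)} (hS : IsPosElem Sᵀ) :
    IsPosElem (swapFactors S)ᵀ := by
  obtain ⟨b, hb⟩ := hS
  obtain rfl : S = (star b * b)ᵀ := by rw [← hb, transpose_transpose]
  refine ⟨of fun s k ↦ of fun r i ↦ star (b r i s k), ?_⟩
  ext k l i j
  simp only [swapFactors, mul_apply, Matrix.sum_apply, star_eq_conjTranspose, conjTranspose_apply,
    of_apply, transpose_apply, star_star]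
  rw [Finset.sum_comm]
  simp only [mul_comm]

lemma mem_closure_matPosCone_of_le (hp : 0 < p) (hle : p ≤ q) (hpq : p * q ≤ 6)
    {S : Matrix (Fin p) (Fin p) (Matrix (Fin q) (Fin q) ℂ)} (hS : IsPosElem S)
    (hS' : IsPosElem Sᵀ) : S ∈ closure (matPosCone p q) := by
  have hp2 : p ≤ 2 := by nlinarith
  interval_cases p
  · exact subset_closure hS.mem_matPosCone_one
  · exact mem_closure_matPosCone_two (by lia) hS hS'

end MatPosCone

/-- if `p*q ≤ 6` then `J_p(M_q(ℂ))` is contained in the closure of the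
cone `M_q(ℂ)⁺ ⊗ M_p(ℂ)⁺` in `M_p(M_q(ℂ))`. -/
theorem J_subset_closure_cone_of_mul_le_six (p q : ℕ) (hp : 0 < p) (hq : 0 < q)
    (hpq : p * q ≤ 6) (S : Matrix (Fin p) (Fin p) (Matrix (Fin q) (Fin q) ℂ))
    (hS : IsPosElem S) (hS' : IsPosElem Sᵀ) :
    S ∈ closure (matPosCone p q) := by
  obtain hle | hle := le_total p q
  · exact mem_closure_matPosCone_of_le hp hle hpq hS hS'
  · have hswap : swapFactors S ∈ closure (matPosCone q p) :=
      mem_closure_matPosCone_of_le hq hle (mul_comm p q ▸ hpq) (isPosElem_swapFactors hS)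
        (isPosElem_transpose_swapFactors hS')
    exact map_mem_closure continuous_swapFactors hswap fun _ ↦ swapFactors_mem_matPosCone
end
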